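/- arXiv:2212.08792 — 10 statements merged into one kernel-verified Lean document; each statement's English description precedes it below -/
import Mathlib

section
/- Assume q ≤ p²·(1−q)^{2(k−1)}. Then for all integers a, b, a′, b′ with 1−k ≤ a, b, a′, b′ ≤ k−1 and a + b = a′ + b′, one has (P_a·P_b − q)·q²·(1−q)^{2(k−1)} ≤ (p²·(1−q)^{2(k−1)} − q)·P_{a′}·P_{b′}. (This is the inequality underlying Theorem 2: RanSwitch satisfies (ε, δ)-TLDP with ε = ln((p²(1−q)^{2(k−1)} − q)/(q²(1−q)^{2(k−1)})) and δ = q.) -/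
/-!
Write `P_j = c_j r^(n + j)` with `c_0 = p`, `c_j = q` for `j ≠ 0`, `r = 1 - q` and `n = k - 1`.
Then `P_a P_b = c_a c_b r^(2n) r^s` depends on the exponents only through `s = a + b`, up to a
coefficient in `[q², p²]`. The lower bound handles `P_{a'} P_{b'}`, so it remains to show
`P_a P_b - δ ≤ (p² r^(2n) - δ) r^s` for `δ = q`. If `s ≥ 0`, this follows from
`c_a c_b ≤ p²` and `r^s ≤ 1`. If `s < 0`, then `a` and `b` are not both `0`, so
`c_a c_b ≤ p q`; as `r^(2n + s) ≤ 1`, this gives `P_a P_b ≤ p q ≤ δ`, and the left side is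
nonpositive while the right side is nonnegative.
-/

section Coeff

variable {K : Type*}

/-- The coefficient `c_j` of `r ^ (n + j)` in the RanSwitch allocating probability `P_j`. -/
def ranSwitchCoeff (p q : K) (j : ℤ) : K :=
  if j = 0 then p else q

variable {p q : K}

section Preorder

variable [Preorder K]

theorem le_ranSwitchCoeff (hqp : q ≤ p) (j : ℤ) : q ≤ ranSwitchCoeff p q j := by
  unfold ranSwitchCoeff
  split_ifs
  exacts [hqp, le_rfl]

theorem ranSwitchCoeff_le (hqp : q ≤ p) (j : ℤ) : ranSwitchCoeff p q j ≤ p := by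
  unfold ranSwitchCoeff
  split_ifs
  exacts [le_rfl, hqp]

end Preorder

variable [CommSemiring K] [PartialOrder K] [IsOrderedRing K]

theorem ranSwitchCoeff_mul_le_sq (hq : 0 ≤ q) (hqp : q ≤ p) (a b : ℤ) :
    ranSwitchCoeff p q a * ranSwitchCoeff p q b ≤ p ^ 2 := by
  rw [sq]
  exact mul_le_mul (ranSwitchCoeff_le hqp a) (ranSwitchCoeff_le hqp b)
    (hq.trans (le_ranSwitchCoeff hqp b)) (hq.trans hqp)

theorem sq_le_ranSwitchCoeff_mul (hq : 0 ≤ q) (hqp : q ≤ p) (a b : ℤ) :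
    q ^ 2 ≤ ranSwitchCoeff p q a * ranSwitchCoeff p q b := by
  rw [sq]
  exact mul_le_mul (le_ranSwitchCoeff hqp a) (le_ranSwitchCoeff hqp b) hq
    (hq.trans (le_ranSwitchCoeff hqp a))

theorem ranSwitchCoeff_mul_le_of_add_ne_zero {a b : ℤ} (hq : 0 ≤ q) (hqp : q ≤ p)
    (hab : a + b ≠ 0) :
    ranSwitchCoeff p q a * ranSwitchCoeff p q b ≤ p * q := by
  rcases eq_or_ne a 0 with rfl | ha
  · have hb : b ≠ 0 := by simpa using hab
    simp [ranSwitchCoeff, hb]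
  · rw [ranSwitchCoeff, if_neg ha, mul_comm]
    exact mul_le_mul_of_nonneg_right (ranSwitchCoeff_le hqp b) hq

end Coeff

section Weight

variable {K : Type*} [Field K]

/-- The RanSwitch allocating probability `P_j`, with the ratio `r` independent of `p` and `q`; the
mechanism on `k` categories is the case `r = 1 - q`, `n = k - 1`. It is defined for every integer
`j`, not only for `-n ≤ j ≤ n`. -/
def ranSwitchWeight (p q r : K) (n : ℕ) (j : ℤ) : K :=
  ranSwitchCoeff p q j * r ^ ((n : ℤ) + j)

theorem ranSwitchWeight_mul {r : K} (hr : r ≠ 0) (p q : K) (n : ℕ) (a b : ℤ) :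
    ranSwitchWeight p q r n a * ranSwitchWeight p q r n b =
      ranSwitchCoeff p q a * ranSwitchCoeff p q b * (r ^ (2 * n) * r ^ (a + b)) := by
  have exponents : r ^ ((n : ℤ) + a) * r ^ ((n : ℤ) + b) = r ^ (2 * n) * r ^ (a + b) := by
    rw [← zpow_natCast, ← zpow_add₀ hr, ← zpow_add₀ hr]
    congr 1
    push_cast
    ring
  rw [ranSwitchWeight, ranSwitchWeight, mul_mul_mul_comm, exponents]

theorem eq_ranSwitchWeight {k : ℕ} {p q r : K} {P : ℤ → K} (hP0 : P 0 = p * r ^ (k - 1))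
    (hPj : ∀ j : ℤ, 1 - (k : ℤ) ≤ j → j ≤ (k : ℤ) - 1 → j ≠ 0 → P j = q * r ^ ((k : ℤ) - 1 + j))
    {j : ℤ} (hj : 1 - (k : ℤ) ≤ j) (hj' : j ≤ (k : ℤ) - 1) :
    P j = ranSwitchWeight p q r (k - 1) j := by
  rcases eq_or_ne j 0 with rfl | hj0
  · simp [ranSwitchWeight, ranSwitchCoeff, hP0]
  · have hcast : ((k - 1 : ℕ) : ℤ) = (k : ℤ) - 1 := by omega
    rw [hPj j hj hj' hj0, ranSwitchWeight, ranSwitchCoeff, if_neg hj0, hcast]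

variable [LinearOrder K] [IsStrictOrderedRing K] {p q r δ : K} {n : ℕ} {a b : ℤ}

theorem sq_mul_le_ranSwitchWeight_mul (hr : 0 < r) (hq : 0 ≤ q) (hqp : q ≤ p) (a b : ℤ) :
    q ^ 2 * (r ^ (2 * n) * r ^ (a + b)) ≤
      ranSwitchWeight p q r n a * ranSwitchWeight p q r n b := by
  rw [ranSwitchWeight_mul hr.ne']
  exact mul_le_mul_of_nonneg_right (sq_le_ranSwitchCoeff_mul hq hqp a b) (by positivity)

theorem ranSwitchWeight_mul_sub_le_of_add_nonneg (hr0 : 0 < r) (hr1 : r ≤ 1) (hq : 0 ≤ q)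
    (hqp : q ≤ p) (hδ : 0 ≤ δ) (hab : 0 ≤ a + b) :
    ranSwitchWeight p q r n a * ranSwitchWeight p q r n b - δ ≤
      (p ^ 2 * r ^ (2 * n) - δ) * r ^ (a + b) := by
  have hcoeff := ranSwitchCoeff_mul_le_sq hq hqp a b
  have hδr : δ * r ^ (a + b) ≤ δ := mul_le_of_le_one_right hδ (zpow_le_one₀ hr0 hr1 hab)
  calc ranSwitchWeight p q r n a * ranSwitchWeight p q r n b - δ
      = ranSwitchCoeff p q a * ranSwitchCoeff p q b * (r ^ (2 * n) * r ^ (a + b)) - δ := by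
        rw [ranSwitchWeight_mul hr0.ne']
    _ ≤ p ^ 2 * (r ^ (2 * n) * r ^ (a + b)) - δ * r ^ (a + b) := by gcongr
    _ = (p ^ 2 * r ^ (2 * n) - δ) * r ^ (a + b) := by ring

theorem ranSwitchWeight_mul_le_of_add_ne_zero (hr0 : 0 < r) (hr1 : r ≤ 1) (hq : 0 ≤ q)
    (hqp : q ≤ p) (hab : -(2 * n : ℤ) ≤ a + b) (hab0 : a + b ≠ 0) :
    ranSwitchWeight p q r n a * ranSwitchWeight p q r n b ≤ p * q := by
  have hpow : r ^ (2 * n) * r ^ (a + b) ≤ 1 := by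
    rw [← zpow_natCast, ← zpow_add₀ hr0.ne']
    exact zpow_le_one₀ hr0 hr1 (by push_cast; linarith)
  have hpq : 0 ≤ p * q := mul_nonneg (hq.trans hqp) hq
  calc ranSwitchWeight p q r n a * ranSwitchWeight p q r n b
      = ranSwitchCoeff p q a * ranSwitchCoeff p q b * (r ^ (2 * n) * r ^ (a + b)) :=
        ranSwitchWeight_mul hr0.ne' ..
    _ ≤ p * q * (r ^ (2 * n) * r ^ (a + b)) := by
        gcongr ?_ * _
        exact ranSwitchCoeff_mul_le_of_add_ne_zero hq hqp hab0
    _ ≤ p * q := mul_le_of_le_one_right hpq hpow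

theorem ranSwitchWeight_mul_sub_le (hr0 : 0 < r) (hr1 : r ≤ 1) (hq : 0 ≤ q) (hqp : q ≤ p)
    (hpqδ : p * q ≤ δ) (hδ : δ ≤ p ^ 2 * r ^ (2 * n)) (hab : -(2 * n : ℤ) ≤ a + b) :
    ranSwitchWeight p q r n a * ranSwitchWeight p q r n b - δ ≤
      (p ^ 2 * r ^ (2 * n) - δ) * r ^ (a + b) := by
  rcases le_or_gt 0 (a + b) with hnonneg | hneg
  · have hδ0 : 0 ≤ δ := (mul_nonneg (hq.trans hqp) hq).trans hpqδ
    exact ranSwitchWeight_mul_sub_le_of_add_nonneg hr0 hr1 hq hqp hδ0 hnonneg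
  · have hleft := (ranSwitchWeight_mul_le_of_add_ne_zero hr0 hr1 hq hqp hab hneg.ne).trans hpqδ
    exact (sub_nonpos.2 hleft).trans (mul_nonneg (sub_nonneg.2 hδ) (zpow_pos hr0 _).le)

theorem ranSwitch_TLDP_case1_general (hr0 : 0 < r) (hr1 : r ≤ 1) (hq : 0 ≤ q) (hqp : q ≤ p)
    (hpqδ : p * q ≤ δ) (hδ : δ ≤ p ^ 2 * r ^ (2 * n)) {a' b' : ℤ}
    (hab : -(2 * n : ℤ) ≤ a + b) (hsum : a + b = a' + b') :
    (ranSwitchWeight p q r n a * ranSwitchWeight p q r n b - δ) * (q ^ 2 * r ^ (2 * n)) ≤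
      (p ^ 2 * r ^ (2 * n) - δ) * (ranSwitchWeight p q r n a' * ranSwitchWeight p q r n b') :=
  calc (ranSwitchWeight p q r n a * ranSwitchWeight p q r n b - δ) * (q ^ 2 * r ^ (2 * n))
      ≤ (p ^ 2 * r ^ (2 * n) - δ) * r ^ (a + b) * (q ^ 2 * r ^ (2 * n)) := by
        gcongr
        exact ranSwitchWeight_mul_sub_le hr0 hr1 hq hqp hpqδ hδ hab
    _ = (p ^ 2 * r ^ (2 * n) - δ) * (q ^ 2 * (r ^ (2 * n) * r ^ (a' + b'))) := by
        rw [hsum]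
        ring
    _ ≤ (p ^ 2 * r ^ (2 * n) - δ) * (ranSwitchWeight p q r n a' * ranSwitchWeight p q r n b') :=
        mul_le_mul_of_nonneg_left (sq_mul_le_ranSwitchWeight_mul hr0 hq hqp a' b')
          (sub_nonneg.2 hδ)

end Weight

/-- core inequality of Theorem 2, case `q ≤ p²(1-q)^{2(k-1)}`:
with the RanSwitch allocating probabilities `P_0 = p(1-q)^{k-1}` and
`P_j = q(1-q)^{k-1+j}` (`j ≠ 0`), for all `a, b, a', b'` in `[1-k, k-1]` with
`a + b = a' + b'` one has
`(P_a P_b − q) q² (1−q)^{2(k−1)} ≤ (p²(1−q)^{2(k−1)} − q) P_{a'} P_{b'}`,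
i.e. RanSwitch satisfies `(ε, δ)`-TLDP with
`ε = ln((p²(1−q)^{2(k−1)} − q)/(q²(1−q)^{2(k−1)}))` and `δ = q`. -/
theorem ranSwitch_TLDP_case1
    (k : ℕ) (hk : 2 ≤ k) (p q : ℝ)
    (hp : p ∈ Set.Ioo (0 : ℝ) 1) (hq : q ∈ Set.Ioo (0 : ℝ) 1)
    (hpq : p + (k - 1 : ℝ) * q = 1) (hpgtq : q < p)
    (P : ℤ → ℝ)
    (hP0 : P 0 = p * (1 - q) ^ (k - 1))
    (hPj : ∀ j : ℤ, 1 - (k : ℤ) ≤ j → j ≤ (k : ℤ) - 1 → j ≠ 0 →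
      P j = q * (1 - q) ^ ((k : ℤ) - 1 + j))
    (hcase : q ≤ p ^ 2 * (1 - q) ^ (2 * (k - 1))) :
    ∀ a b a' b' : ℤ,
      1 - (k : ℤ) ≤ a → a ≤ (k : ℤ) - 1 →
      1 - (k : ℤ) ≤ b → b ≤ (k : ℤ) - 1 →
      1 - (k : ℤ) ≤ a' → a' ≤ (k : ℤ) - 1 →
      1 - (k : ℤ) ≤ b' → b' ≤ (k : ℤ) - 1 →
      a + b = a' + b' →
      (P a * P b - q) * (q ^ 2 * (1 - q) ^ (2 * (k - 1)))
        ≤ (p ^ 2 * (1 - q) ^ (2 * (k - 1)) - q) * (P a' * P b') := by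
  intro a b a' b' ha ha₂ hb hb₂ ha' ha₂' hb' hb₂' hsum
  rw [eq_ranSwitchWeight hP0 hPj ha ha₂, eq_ranSwitchWeight hP0 hPj hb hb₂,
    eq_ranSwitchWeight hP0 hPj ha' ha₂', eq_ranSwitchWeight hP0 hPj hb' hb₂']
  exact ranSwitch_TLDP_case1_general (sub_pos.2 hq.2) (sub_le_self 1 hq.1.le) hq.1.le hpgtq.le
    (mul_le_of_le_one_left hq.1.le hp.2.le) hcase (by omega) hsum
end

section
/- For every offset sequence x : ℕ → {0, 1, …, k−1}, the output map t ↦ R_t of the RanSwitch process is injective, and R_t ≤ t + k − 1 for every t ∈ ℕ. Equivalently, the two-way switch operation never releases a value twice (no repeated values), and the value originally at position i is never released before time i − k + 1. -/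
/-- The RanSwitch process: `ranSwitchA x t` is the bijection `A_t : ℕ → ℕ` recording, for each
slot, the original position of the value currently there. `A_0 = id` and `A_{t+1}` is obtained
from `A_t` by swapping the entries at positions `t` and `t + x t`. -/
def ranSwitchA (x : ℕ → ℕ) : ℕ → ℕ → ℕ
  | 0 => id
  | t + 1 => fun s => ranSwitchA x t (Equiv.swap t (t + x t) s)

/-- The output of the RanSwitch process at time `t`: the original position of the value released
at time `t`, i.e. `R_t = A_t (t + x t)`. -/
def ranSwitchR (x : ℕ → ℕ) (t : ℕ) : ℕ := ranSwitchA x t (t + x t)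

/-!
The swap at time `u` only touches positions `≥ u`, so from time `t + 1` on, position `t` holds the
released value `R_t` forever; as every `A_n` is injective, no value is released twice. The swaps at
times `u ≤ t` never touch a position beyond `max_{u ≤ t} (u + x u)`, so they permute the positions
up to that bound, and `R_t` stays below it.
-/

section RanSwitch

variable (x : ℕ → ℕ)

theorem ranSwitchA_succ_apply (t s : ℕ) :
    ranSwitchA x (t + 1) s = ranSwitchA x t (Equiv.swap t (t + x t) s) :=
  rfl

theorem ranSwitchA_injective (t : ℕ) : Function.Injective (ranSwitchA x t) := by
  induction t with
  | zero => exact Function.injective_id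
  | succ t ih => exact ih.comp (Equiv.swap t (t + x t)).injective

theorem ranSwitchA_succ_self (t : ℕ) : ranSwitchA x (t + 1) t = ranSwitchR x t := by
  rw [ranSwitchA_succ_apply, Equiv.swap_apply_left, ranSwitchR]

theorem ranSwitchA_succ_of_lt {t s : ℕ} (hst : s < t) :
    ranSwitchA x (t + 1) s = ranSwitchA x t s := by
  rw [ranSwitchA_succ_apply, Equiv.swap_apply_of_ne_of_ne hst.ne (by lia)]

theorem ranSwitchA_eq_ranSwitchR_of_lt {t n : ℕ} (htn : t < n) :
    ranSwitchA x n t = ranSwitchR x t := by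
  induction n, htn using Nat.le_induction with
  | base => exact ranSwitchA_succ_self x t
  | succ n htn ih => rw [ranSwitchA_succ_of_lt x htn, ih]

theorem ranSwitchR_injective : Function.Injective (ranSwitchR x) := by
  intro t u htu
  have ht : t < max t u + 1 := by lia
  have hu : u < max t u + 1 := by lia
  rw [← ranSwitchA_eq_ranSwitchR_of_lt x ht, ← ranSwitchA_eq_ranSwitchR_of_lt x hu] at htu
  exact ranSwitchA_injective x _ htu

theorem ranSwitchA_le {t s m : ℕ} (hm : ∀ u < t, u + x u ≤ m) (hs : s ≤ m) :
    ranSwitchA x t s ≤ m := by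
  induction t generalizing s with
  | zero => exact hs
  | succ t ih =>
    have ht : t + x t ≤ m := hm t t.lt_succ_self
    have hswap : Equiv.swap t (t + x t) s ≤ m := by
      rw [Equiv.swap_apply_def]
      split_ifs <;> lia
    exact ih (fun u hu => hm u (hu.trans t.lt_succ_self)) hswap

theorem ranSwitchR_le_partialSups (t : ℕ) :
    ranSwitchR x t ≤ partialSups (fun u => u + x u) t :=
  ranSwitchA_le x (fun _ hu => le_partialSups_of_le (fun u => u + x u) hu.le)
    (le_partialSups (fun u => u + x u) t)

end RanSwitch

theorem ranSwitch_injective_and_window_general (x : ℕ → ℕ) :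
    Function.Injective (ranSwitchR x) ∧
      ∀ t, ranSwitchR x t ≤ partialSups (fun u => u + x u) t :=
  ⟨ranSwitchR_injective x, ranSwitchR_le_partialSups x⟩

/-- for every offset sequence `x` with values in `{0, …, k-1}`, the output map
`t ↦ R_t` of the RanSwitch process is injective (no value is released twice), and
`R_t ≤ t + k - 1` for every `t` (the value originally at position `i` is never released
before time `i - k + 1`). -/
theorem ranSwitch_injective_and_window
    (k : ℕ) (hk : 2 ≤ k) (x : ℕ → ℕ) (hx : ∀ t, x t ≤ k - 1) :
    Function.Injective (ranSwitchR x) ∧ ∀ t, ranSwitchR x t ≤ t + k - 1 := by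
  obtain ⟨hinj, hle⟩ := ranSwitch_injective_and_window_general x
  exact ⟨hinj, fun t => (hle t).trans (partialSups_le _ t _ fun u hu => by have := hx u; lia)⟩
end

section
/- For every admissible offset sequence of the StaSwitch process, the delay invariant b_t(s) ≤ k − 1 holds for all t and s, the output map t ↦ R_t is a bijection from ℕ to ℕ, and |R_t − t| ≤ k − 1 for every t ∈ ℕ. Equivalently, StaSwitch releases every value exactly once (no missing, empty, or repeated values), and each value is released within k − 1 timestamps of its original position. -/
/-- The state of the StaSwitch process after `t` steps, for a given offset sequence `x`:
the first component is the bijection `A_t : ℕ → ℕ` (`A_t s` is the original position of the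
value currently at slot `s`; `A_0 = id`), and the second component is the delay counter
`b_t : ℕ → ℕ` (`b_0 ≡ 0`). At step `t`, `A_{t+1}` is obtained from `A_t` by swapping the
entries at positions `t` and `t + x t`, and `b_{t+1}` agrees with `b_t` except that
`b_{t+1}(t + x t) = b_t t + x t`. -/
def staState (x : ℕ → ℕ) : ℕ → (ℕ → ℕ) × (ℕ → ℕ)
  | 0 => (id, fun _ => 0)
  | t + 1 =>
      ((fun s => (staState x t).1 (Equiv.swap t (t + x t) s)),
       Function.update (staState x t).2 (t + x t) ((staState x t).2 t + x t))

/-- The output of the StaSwitch process at time `t`: the original position of the value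
released at time `t`, i.e. `R_t = A_t (t + x t)`. -/
def staR (x : ℕ → ℕ) (t : ℕ) : ℕ := (staState x t).1 (t + x t)

/-!
A slot `s ≥ t` has not yet released anything at time `t`, and for such slots the counter is exactly
the displacement of the entry: `A_t s + b_t s = s`. Admissibility bounds every counter by `k - 1`,
so `R_t = t + x t - b_t (t + x t)`, where both corrections to `t` lie in `[0, k - 1]`.
Once slot `t` has released its value it is never touched again, hence `A_T t = R_t` for all `T > t`.
Injectivity of `R` is thus inherited from `A_T`. For surjectivity, at time `T = v + k` the value `v`
cannot be in a slot `s ≥ T`, because its displacement would be at least `k`.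
-/

section StaSwitch

variable {x : ℕ → ℕ} {d s t T : ℕ}

theorem staState_fst_bijective (x : ℕ → ℕ) (t : ℕ) : Function.Bijective (staState x t).1 := by
  induction t with
  | zero => exact Function.bijective_id
  | succ t ih => exact ih.comp (Equiv.swap t (t + x t)).bijective

theorem staState_succ_fst_self (x : ℕ → ℕ) (t : ℕ) : (staState x (t + 1)).1 t = staR x t :=
  congrArg (staState x t).1 (Equiv.swap_apply_left t (t + x t))

theorem staState_succ_fst_add_offset (x : ℕ → ℕ) (t : ℕ) :
    (staState x (t + 1)).1 (t + x t) = (staState x t).1 t :=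
  congrArg (staState x t).1 (Equiv.swap_apply_right t (t + x t))

theorem staState_succ_fst_of_ne (hst : s ≠ t) (hs : s ≠ t + x t) :
    (staState x (t + 1)).1 s = (staState x t).1 s :=
  congrArg (staState x t).1 (Equiv.swap_apply_of_ne_of_ne hst hs)

theorem staState_succ_snd_add_offset (x : ℕ → ℕ) (t : ℕ) :
    (staState x (t + 1)).2 (t + x t) = (staState x t).2 t + x t :=
  Function.update_self ..

theorem staState_succ_snd_of_ne (hs : s ≠ t + x t) :
    (staState x (t + 1)).2 s = (staState x t).2 s :=
  Function.update_of_ne hs ..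

theorem staState_snd_le (hadm : ∀ t, x t + (staState x t).2 t ≤ d) (t s : ℕ) :
    (staState x t).2 s ≤ d := by
  induction t with
  | zero => exact Nat.zero_le d
  | succ t ih =>
    obtain rfl | hs := eq_or_ne s (t + x t)
    · rw [staState_succ_snd_add_offset, add_comm]
      exact hadm t
    · rwa [staState_succ_snd_of_ne hs]

theorem staState_fst_add_snd (hts : t ≤ s) : (staState x t).1 s + (staState x t).2 s = s := by
  induction t generalizing s with
  | zero => rfl
  | succ t ih =>
    obtain rfl | hs := eq_or_ne s (t + x t)
    · rw [staState_succ_fst_add_offset, staState_succ_snd_add_offset, ← add_assoc, ih le_rfl]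
    · rw [staState_succ_fst_of_ne (Nat.ne_of_gt hts) hs, staState_succ_snd_of_ne hs,
        ih (Nat.le_of_succ_le hts)]

theorem staState_fst_eq_staR_of_lt (htT : t < T) : (staState x T).1 t = staR x t := by
  induction T, htT using Nat.le_induction with
  | base => exact staState_succ_fst_self x t
  | succ T htT ih => rw [staState_succ_fst_of_ne (by omega) (by omega), ih]

theorem staR_injective (x : ℕ → ℕ) : Function.Injective (staR x) := by
  intro s t hst
  have hs : s < max s t + 1 := Nat.lt_succ_of_le (le_max_left s t)
  have ht : t < max s t + 1 := Nat.lt_succ_of_le (le_max_right s t)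
  rw [← staState_fst_eq_staR_of_lt hs, ← staState_fst_eq_staR_of_lt ht] at hst
  exact (staState_fst_bijective x _).injective hst

theorem staR_surjective (hadm : ∀ t, x t + (staState x t).2 t ≤ d) :
    Function.Surjective (staR x) := by
  intro v
  obtain ⟨s, hs⟩ := (staState_fst_bijective x (v + d + 1)).surjective v
  have released : s < v + d + 1 := by
    by_contra! pending
    have displacement := staState_fst_add_snd (x := x) pending
    have delay_le := staState_snd_le hadm (v + d + 1) s
    omega
  exact ⟨s, (staState_fst_eq_staR_of_lt released).symm.trans hs⟩

theorem staR_add_staState_snd (x : ℕ → ℕ) (t : ℕ) :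
    staR x t + (staState x t).2 (t + x t) = t + x t :=
  staState_fst_add_snd (Nat.le_add_right t (x t))

theorem abs_staR_sub_le (hadm : ∀ t, x t + (staState x t).2 t ≤ d) (t : ℕ) :
    |(staR x t : ℤ) - t| ≤ d := by
  have displacement := staR_add_staState_snd x t
  have delay_le := staState_snd_le hadm t (t + x t)
  have offset_le : x t ≤ d := le_of_add_le_left (hadm t)
  rw [abs_le]
  omega

end StaSwitch

/-- for every admissible offset sequence (i.e. `x t ≤ k - 1 - b_t t` at every
step), the delay invariant `b_t s ≤ k - 1` holds for all `t` and `s`, the output map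
`t ↦ R_t` is a bijection of `ℕ` (no missing, empty, or repeated values), and
`|R_t − t| ≤ k − 1` for every `t` (each value is released within `k-1` timestamps of its
original position). -/
theorem staSwitch_invariant_bijective_window
    (k : ℕ) (hk : 2 ≤ k) (x : ℕ → ℕ)
    (hadm : ∀ t, x t + (staState x t).2 t ≤ k - 1) :
    (∀ t s, (staState x t).2 s ≤ k - 1) ∧
    Function.Bijective (staR x) ∧
    (∀ t, |(staR x t : ℤ) - (t : ℤ)| ≤ (k : ℤ) - 1) := by
  have window (t : ℕ) : |(staR x t : ℤ) - t| ≤ (k : ℤ) - 1 := by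
    simpa only [Nat.cast_pred (zero_lt_two.trans_le hk)] using abs_staR_sub_le hadm t
  exact ⟨staState_snd_le hadm, ⟨staR_injective x, staR_surjective hadm⟩, window⟩
end

section
/- The delay-state probabilities are strictly increasing: P^1 < P^2 < ⋯ < P^{k−1}. (This is Lemma 1 of the paper.) -/
/-!
Write `S m = ∏_{l=1}^m (1 - q_l)`, so that equation (iii) is the renewal equation
`P^{n+1} = q ∑_{j ≤ n} P^j S (n - j)`. By (i), (iv) and positivity of the `P^i`, every `q_l` is less
than `q`, so one more step multiplies each `S (n - j)` by a factor greater than `1 - q`; the sum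
defining `P^{n+2}` therefore retains more than the fraction `1 - q` of `P^{n+1}`, while its new
term `j = n + 1` contributes the missing `q P^{n+1}`.
-/

theorem sum_range_lt_sum_range_of_pos {M : Type*} [AddCommMonoid M] [PartialOrder M]
    [IsOrderedCancelAddMonoid M] {f : ℕ → M} {m n : ℕ} (hmn : m < n)
    (hf : ∀ i, m ≤ i → i < n → 0 < f i) :
    ∑ i ∈ Finset.range m, f i < ∑ i ∈ Finset.range n, f i := by
  refine Finset.sum_lt_sum_of_subset (Finset.range_subset_range.mpr hmn.le)
    (Finset.mem_range.mpr hmn) Finset.notMem_range_self (hf m le_rfl hmn) fun i hin him => ?_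
  rw [Finset.mem_range] at hin him
  exact (hf i (not_lt.mp him) hin).le

section

variable {R : Type*} [CommRing R] [PartialOrder R] [IsStrictOrderedRing R]

theorem one_sub_mul_prod_Icc_lt_prod_Icc_succ {Q : ℕ → R} {q : R} {m : ℕ}
    (hQ_lt_one : ∀ l ∈ Finset.Icc 1 m, Q l < 1) (hQ_succ : Q (m + 1) < q) :
    (1 - q) * ∏ l ∈ Finset.Icc 1 m, (1 - Q l) < ∏ l ∈ Finset.Icc 1 (m + 1), (1 - Q l) := by
  have hprod_pos : 0 < ∏ l ∈ Finset.Icc 1 m, (1 - Q l) :=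
    Finset.prod_pos fun l hl => sub_pos.mpr (hQ_lt_one l hl)
  rw [Finset.prod_Icc_succ_top (Nat.le_add_left 1 m), mul_comm]
  exact mul_lt_mul_of_pos_left (sub_lt_sub_left hQ_succ 1) hprod_pos

theorem renewal_lt_renewal_succ {q : R} {u w : ℕ → R} {n : ℕ} (hq : 0 < q)
    (hu : ∀ j ≤ n, 0 < u j) (hw_zero : w 0 = 1) (hw : ∀ m ≤ n, (1 - q) * w m < w (m + 1))
    (hu_succ : u (n + 1) = q * ∑ j ∈ Finset.range (n + 1), u j * w (n - j))
    (hu_succ_succ : u (n + 2) = q * ∑ j ∈ Finset.range (n + 2), u j * w (n + 1 - j)) :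
    u (n + 1) < u (n + 2) := by
  have hsum : (1 - q) * ∑ j ∈ Finset.range (n + 1), u j * w (n - j) <
      ∑ j ∈ Finset.range (n + 1), u j * w (n + 1 - j) := by
    rw [Finset.mul_sum]
    refine Finset.sum_lt_sum_of_nonempty Finset.nonempty_range_add_one fun j hj => ?_
    have hjn : j ≤ n := Nat.lt_succ_iff.mp (Finset.mem_range.mp hj)
    rw [mul_left_comm, Nat.succ_sub hjn]
    exact mul_lt_mul_of_pos_left (hw (n - j) (Nat.sub_le n j)) (hu j hjn)
  calc u (n + 1)
      = q * ((1 - q) * ∑ j ∈ Finset.range (n + 1), u j * w (n - j) + u (n + 1)) := by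
        linear_combination (1 - q) * hu_succ
    _ < q * (∑ j ∈ Finset.range (n + 1), u j * w (n + 1 - j) + u (n + 1)) :=
        mul_lt_mul_of_pos_left (add_lt_add_left hsum _) hq
    _ = u (n + 2) := by
        rw [hu_succ_succ, Finset.sum_range_succ _ (n + 1), Nat.sub_self, hw_zero, mul_one]

theorem staSwitch_delay_state_strict_mono_general {k : ℕ} {q : R} {P Q : ℕ → R} (hq : 0 < q)
    (hP_pos : ∀ i, i ≤ k - 1 → 0 < P i)
    (hQ_lt_one : ∀ j, 1 ≤ j → j ≤ k - 1 → Q j < 1)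
    (hQ : ∀ j, 1 ≤ j → j ≤ k - 1 → Q j = q * ∑ i ∈ Finset.range (k - j), P i)
    (hP : ∀ i, 1 ≤ i → i ≤ k - 1 →
      P i = q * ∑ j ∈ Finset.range i, P j * ∏ l ∈ Finset.Icc 1 (i - 1 - j), (1 - Q l))
    (hP_sum : ∑ i ∈ Finset.range k, P i = 1) :
    ∀ i, 1 ≤ i → i + 1 ≤ k - 1 → P i < P (i + 1) := by
  have hQ_lt : ∀ l, 1 ≤ l → l ≤ k - 1 → Q l < q := fun l hl hlk =>
    calc Q l = q * ∑ i ∈ Finset.range (k - l), P i := hQ l hl hlk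
      _ < q * ∑ i ∈ Finset.range k, P i :=
        mul_lt_mul_of_pos_left
          (sum_range_lt_sum_range_of_pos (by lia) fun i _ hik => hP_pos i (by lia)) hq
      _ = q := by rw [hP_sum, mul_one]
  intro i hi hik
  obtain ⟨n, rfl⟩ := Nat.exists_eq_add_of_le' hi
  refine renewal_lt_renewal_succ (w := fun m => ∏ l ∈ Finset.Icc 1 m, (1 - Q l)) hq
    (fun j hj => hP_pos j (by lia)) (by simp) (fun m hm => ?_)
    (hP (n + 1) hi (by lia)) (hP (n + 2) (by lia) hik)
  refine one_sub_mul_prod_Icc_lt_prod_Icc_succ (fun l hl => ?_) (hQ_lt (m + 1) (by lia) (by lia))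
  rw [Finset.mem_Icc] at hl
  exact hQ_lt_one l hl.1 (by lia)

end

/-- Lemma 1 of the paper: the delay-state probabilities are strictly
increasing: `P^1 < P^2 < ⋯ < P^{k−1}`. -/
theorem staSwitch_delay_state_strict_mono
    (k : ℕ) (hk : 3 ≤ k) (p q : ℝ)
    (hp : p ∈ Set.Ioo (0 : ℝ) 1) (hq : q ∈ Set.Ioo (0 : ℝ) 1)
    (hpq : p + (k - 1 : ℝ) * q = 1)
    (P Q : ℕ → ℝ)
    (hPmem : ∀ i, i ≤ k - 1 → P i ∈ Set.Ioo (0 : ℝ) 1)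
    (hQmem : ∀ j, 1 ≤ j → j ≤ k - 1 → Q j ∈ Set.Ioo (0 : ℝ) 1)
    (hQ : ∀ j, 1 ≤ j → j ≤ k - 1 → Q j = q * ∑ i ∈ Finset.range (k - j), P i)
    (hP0 : P 0 = ∏ j ∈ Finset.Icc 1 (k - 1), (1 - Q j))
    (hPi : ∀ i, 1 ≤ i → i ≤ k - 1 →
      P i = q * ∑ j ∈ Finset.range i, P j * ∏ l ∈ Finset.Icc 1 (i - 1 - j), (1 - Q l))
    (hPsum : ∑ i ∈ Finset.range k, P i = 1)
    (p0 : ℝ) (hp0 : p0 = ∑ i ∈ Finset.range k, P i * (p + (i : ℝ) * q))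
    :
    ∀ i, 1 ≤ i → i + 1 ≤ k - 1 → P i < P (i + 1) := by
  exact staSwitch_delay_state_strict_mono_general hq.1 (fun i hi => (hPmem i hi).1)
    (fun j hj hjk => (hQmem j hj hjk).2) hQ hPi hPsum
end

section
/- The probability of the maximal delay state satisfies P^{k−1} ≤ q/(1+q), with strict inequality when k ≥ 3. -/
/-!
Equation (iii) at `i = k - 1` writes `P^{k-1}` as `q` times a weighted sum of `P^0, …, P^{k-2}`
with weights `∏ (1 - q_l) ≤ 1`, so by (iv) `P^{k-1} ≤ q (1 - P^{k-1})`. When `k ≥ 3` the weight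
of `P^0` is a nonempty product, hence less than `1`, and the inequality is strict.
-/

section OrderedCommRing

variable {ι R : Type*} [CommRing R] [LinearOrder R] [IsStrictOrderedRing R] {s : Finset ι}

theorem prod_one_sub_le_one {f : ι → R} (hf : ∀ i ∈ s, f i ∈ Set.Icc 0 1) :
    ∏ i ∈ s, (1 - f i) ≤ 1 :=
  Finset.prod_le_one (fun i hi => sub_nonneg.2 (hf i hi).2) fun i hi => sub_le_self 1 (hf i hi).1

theorem prod_one_sub_lt_one {f : ι → R} (hf : ∀ i ∈ s, f i ∈ Set.Icc 0 1)
    (hpos : ∃ i ∈ s, 0 < f i) : ∏ i ∈ s, (1 - f i) < 1 := by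
  classical
  obtain ⟨i, hi, hfi⟩ := hpos
  have herase : ∏ j ∈ s.erase i, (1 - f j) ≤ 1 :=
    prod_one_sub_le_one fun j hj => hf j (Finset.mem_of_mem_erase hj)
  calc ∏ j ∈ s, (1 - f j) = (1 - f i) * ∏ j ∈ s.erase i, (1 - f j) :=
        (Finset.mul_prod_erase s _ hi).symm
    _ ≤ 1 - f i := mul_le_of_le_one_right (sub_nonneg.2 (hf i hi).2) herase
    _ < 1 := sub_lt_self 1 hfi

theorem sum_mul_le_sum_of_le_one {f w : ι → R} (hf : ∀ i ∈ s, 0 ≤ f i) (hw : ∀ i ∈ s, w i ≤ 1) :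
    ∑ i ∈ s, f i * w i ≤ ∑ i ∈ s, f i :=
  Finset.sum_le_sum fun i hi => mul_le_of_le_one_right (hf i hi) (hw i hi)

theorem sum_mul_lt_sum_of_le_one {f w : ι → R} (hf : ∀ i ∈ s, 0 ≤ f i) (hw : ∀ i ∈ s, w i ≤ 1)
    (hlt : ∃ i ∈ s, 0 < f i ∧ w i < 1) : ∑ i ∈ s, f i * w i < ∑ i ∈ s, f i := by
  obtain ⟨i, hi, hfi, hwi⟩ := hlt
  exact Finset.sum_lt_sum (fun j hj => mul_le_of_le_one_right (hf j hj) (hw j hj))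
    ⟨i, hi, mul_lt_of_lt_one_right hfi hwi⟩

end OrderedCommRing

section OrderedField

variable {K : Type*} [Field K] [LinearOrder K] [IsStrictOrderedRing K]

theorem le_div_one_add_iff {x q : K} (hq : 0 < 1 + q) : x ≤ q / (1 + q) ↔ x ≤ q * (1 - x) := by
  rw [le_div_iff₀ hq]
  constructor <;> intro h <;> linarith

theorem lt_div_one_add_iff {x q : K} (hq : 0 < 1 + q) : x < q / (1 + q) ↔ x < q * (1 - x) := by
  rw [lt_div_iff₀ hq]
  constructor <;> intro h <;> linarith

theorem staSwitch_max_delay_state_bound_general {k : ℕ} (hk : 2 ≤ k) {q : K} (hq : 0 < q)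
    {P Q : ℕ → K} (hP : ∀ i < k - 1, 0 < P i) (hQ : ∀ j, 1 ≤ j → j < k - 1 → Q j ∈ Set.Ioc 0 1)
    (hPlast : P (k - 1) =
      q * ∑ j ∈ Finset.range (k - 1), P j * ∏ l ∈ Finset.Icc 1 (k - 1 - 1 - j), (1 - Q l))
    (hPsum : ∑ i ∈ Finset.range k, P i = 1) :
    P (k - 1) ≤ q / (1 + q) ∧ (3 ≤ k → P (k - 1) < q / (1 + q)) := by
  have hrest : ∑ j ∈ Finset.range (k - 1), P j = 1 - P (k - 1) := by
    rw [← hPsum, ← Finset.sum_range_succ_sub_top, Nat.sub_add_cancel (by lia)]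
  have hPnonneg : ∀ j ∈ Finset.range (k - 1), 0 ≤ P j := fun j hj =>
    (hP j (Finset.mem_range.1 hj)).le
  have hQmem : ∀ j, ∀ l ∈ Finset.Icc 1 (k - 1 - 1 - j), Q l ∈ Set.Icc 0 1 := fun j l hl =>
    Set.Ioc_subset_Icc_self (hQ l (Finset.mem_Icc.1 hl).1 (by grind))
  have hweight : ∀ j ∈ Finset.range (k - 1), ∏ l ∈ Finset.Icc 1 (k - 1 - 1 - j), (1 - Q l) ≤ 1 :=
    fun j _ => prod_one_sub_le_one (hQmem j)
  have hq1 : 0 < 1 + q := by positivity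
  rw [le_div_one_add_iff hq1, lt_div_one_add_iff hq1, ← hrest, hPlast]
  refine ⟨?_, fun hk3 => ?_⟩
  · exact mul_le_mul_of_nonneg_left (sum_mul_le_sum_of_le_one hPnonneg hweight) hq.le
  · have hweight_zero : ∏ l ∈ Finset.Icc 1 (k - 1 - 1 - 0), (1 - Q l) < 1 :=
      prod_one_sub_lt_one (hQmem 0)
        ⟨1, Finset.mem_Icc.2 ⟨le_rfl, by lia⟩, (hQ 1 le_rfl (by lia)).1⟩
    exact mul_lt_mul_of_pos_left (sum_mul_lt_sum_of_le_one hPnonneg hweight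
      ⟨0, Finset.mem_range.2 (by lia), hP 0 (by lia), hweight_zero⟩) hq

end OrderedField

/-- the probability of the maximal delay state satisfies
`P^{k−1} ≤ q/(1+q)`, with strict inequality when `k ≥ 3`. -/
theorem staSwitch_max_delay_state_bound
    (k : ℕ) (hk : 3 ≤ k) (p q : ℝ)
    (hp : p ∈ Set.Ioo (0 : ℝ) 1) (hq : q ∈ Set.Ioo (0 : ℝ) 1)
    (hpq : p + (k - 1 : ℝ) * q = 1)
    (P Q : ℕ → ℝ)
    (hPmem : ∀ i, i ≤ k - 1 → P i ∈ Set.Ioo (0 : ℝ) 1)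
    (hQmem : ∀ j, 1 ≤ j → j ≤ k - 1 → Q j ∈ Set.Ioo (0 : ℝ) 1)
    (hQ : ∀ j, 1 ≤ j → j ≤ k - 1 → Q j = q * ∑ i ∈ Finset.range (k - j), P i)
    (hP0 : P 0 = ∏ j ∈ Finset.Icc 1 (k - 1), (1 - Q j))
    (hPi : ∀ i, 1 ≤ i → i ≤ k - 1 →
      P i = q * ∑ j ∈ Finset.range i, P j * ∏ l ∈ Finset.Icc 1 (i - 1 - j), (1 - Q l))
    (hPsum : ∑ i ∈ Finset.range k, P i = 1)
    (p0 : ℝ) (hp0 : p0 = ∑ i ∈ Finset.range k, P i * (p + (i : ℝ) * q))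
    :
    P (k - 1) ≤ q / (1 + q) ∧ (3 ≤ k → P (k - 1) < q / (1 + q)) :=
  staSwitch_max_delay_state_bound_general (by lia) hq.1 (fun i hi => (hPmem i hi.le).1)
    (fun j hj hjk => Set.Ioo_subset_Ioc_self (hQmem j hj hjk.le)) (hPi _ (by lia) le_rfl) hPsum
end

section
/- The expected probability of staying at the current timestamp satisfies p_0 ≤ p + k(1−p)q/(2(1+q)). -/
/-!
Every weight `1 - Q l` in the recursion for `P i` lies in `[0, 1]`, so `P i` is at most `q` times
the mass `∑ j < i, P j` of the earlier states, which is at most `1 - P i`. Hence `P i ≤ q / (1 + q)`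
for every `i ≥ 1`. The index `i = 0` does not contribute to the mean `∑ i, i * P i`, which is
therefore at most `q / (1 + q) * (k * (k - 1) / 2)`, and `(k - 1) * q = 1 - p`.
-/

open Finset

lemma sum_range_natCast_eq {K : Type*} [DivisionRing K] [CharZero K] (n : ℕ) :
    ∑ i ∈ range n, (i : K) = n * (n - 1) / 2 := by
  rw [← Nat.cast_sum, sum_range_id, ← Nat.choose_two_right, Nat.cast_choose_two]

lemma sum_mul_add_mul_eq_of_sum_eq_one {R ι : Type*} [CommSemiring R] {s : Finset ι}
    {w : ι → R} (hw : ∑ i ∈ s, w i = 1) (a b : R) (x : ι → R) :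
    ∑ i ∈ s, w i * (a + x i * b) = a + b * ∑ i ∈ s, w i * x i := by
  calc ∑ i ∈ s, w i * (a + x i * b)
      = (∑ i ∈ s, w i) * a + b * ∑ i ∈ s, w i * x i := by
        rw [sum_mul, mul_sum, ← sum_add_distrib]
        exact sum_congr rfl fun i _ => by ring
    _ = a + b * ∑ i ∈ s, w i * x i := by rw [hw, one_mul]

lemma sum_mul_prod_one_sub_le_sum {R ι κ : Type*} [CommRing R] [PartialOrder R]
    [IsOrderedRing R] {s : Finset ι} {t : ι → Finset κ} {f : ι → R} {g : κ → R}
    (hf : ∀ i ∈ s, 0 ≤ f i) (hg : ∀ i ∈ s, ∀ l ∈ t i, g l ∈ Set.Icc 0 1) :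
    ∑ i ∈ s, f i * ∏ l ∈ t i, (1 - g l) ≤ ∑ i ∈ s, f i :=
  sum_le_sum fun i hi => mul_le_of_le_one_right (hf i hi) <|
    prod_le_one (fun l hl => sub_nonneg.2 (hg i hi l hl).2)
      fun l hl => sub_le_self 1 (hg i hi l hl).1

section OrderedField

variable {K : Type*} [Field K] [LinearOrder K] [IsStrictOrderedRing K]

lemma sum_range_mul_natCast_le {n : ℕ} {f : ℕ → K} {c : K}
    (hf : ∀ i, 1 ≤ i → i < n → f i ≤ c) :
    ∑ i ∈ range n, f i * i ≤ c * (n * (n - 1) / 2) := by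
  rw [← sum_range_natCast_eq, mul_sum]
  refine sum_le_sum fun i hi => ?_
  rcases i.eq_zero_or_pos with rfl | hpos
  · simp
  · exact mul_le_mul_of_nonneg_right (hf i hpos (mem_range.1 hi)) i.cast_nonneg

lemma le_div_one_add_of_le_mul_sum_range {n i : ℕ} {f : ℕ → K} {q : K} (hq : 0 ≤ q)
    (hf : ∀ j < n, 0 ≤ f j) (hsum : ∑ j ∈ range n, f j ≤ 1) (hi : i < n)
    (hfi : f i ≤ q * ∑ j ∈ range i, f j) :
    f i ≤ q / (1 + q) := by
  have hmass : ∑ j ∈ range i, f j + f i ≤ 1 := by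
    rw [← sum_range_succ]
    exact (sum_le_sum_of_subset_of_nonneg (range_subset_range.2 hi)
      fun j hj _ => hf j (mem_range.1 hj)).trans hsum
  have hself : f i ≤ q * (1 - f i) :=
    hfi.trans (mul_le_mul_of_nonneg_left (le_sub_iff_add_le.2 hmass) hq)
  rw [le_div_iff₀ (by positivity)]
  linarith

theorem staSwitch_p0_upper_bound_general {k : ℕ} {p q : K} (hq : 0 ≤ q)
    (hpq : p + (k - 1 : K) * q = 1) {P Q : ℕ → K} (hP : ∀ i < k, 0 ≤ P i)
    (hQ : ∀ j, 1 ≤ j → j < k → Q j ∈ Set.Icc 0 1)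
    (hrec : ∀ i, 1 ≤ i → i < k →
      P i ≤ q * ∑ j ∈ range i, P j * ∏ l ∈ Icc 1 (i - 1 - j), (1 - Q l))
    (hsum : ∑ i ∈ range k, P i = 1) :
    ∑ i ∈ range k, P i * (p + i * q) ≤ p + k * (1 - p) * q / (2 * (1 + q)) := by
  have hbound (i : ℕ) (hi : 1 ≤ i) (hik : i < k) : P i ≤ q / (1 + q) := by
    refine le_div_one_add_of_le_mul_sum_range hq hP hsum.le hik ((hrec i hi hik).trans ?_)
    refine mul_le_mul_of_nonneg_left (sum_mul_prod_one_sub_le_sum ?_ ?_) hq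
    · exact fun j hj => hP j ((mem_range.1 hj).trans hik)
    · intro j _ l hl
      exact hQ l (mem_Icc.1 hl).1 (by grind)
  calc ∑ i ∈ range k, P i * (p + i * q)
      = p + q * ∑ i ∈ range k, P i * i := sum_mul_add_mul_eq_of_sum_eq_one hsum p q _
    _ ≤ p + q * (q / (1 + q) * (k * (k - 1) / 2)) := by
        gcongr
        exact sum_range_mul_natCast_le hbound
    _ = p + k * (1 - p) * q / (2 * (1 + q)) := by
        rw [← eq_sub_iff_add_eq'.2 hpq]
        field_simp

end OrderedField

/-- the expected probability of staying at the current timestamp satisfies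
`p_0 ≤ p + k(1−p)q/(2(1+q))`. -/
theorem staSwitch_p0_upper_bound
    (k : ℕ) (hk : 3 ≤ k) (p q : ℝ)
    (hp : p ∈ Set.Ioo (0 : ℝ) 1) (hq : q ∈ Set.Ioo (0 : ℝ) 1)
    (hpq : p + (k - 1 : ℝ) * q = 1)
    (P Q : ℕ → ℝ)
    (hPmem : ∀ i, i ≤ k - 1 → P i ∈ Set.Ioo (0 : ℝ) 1)
    (hQmem : ∀ j, 1 ≤ j → j ≤ k - 1 → Q j ∈ Set.Ioo (0 : ℝ) 1)
    (hQ : ∀ j, 1 ≤ j → j ≤ k - 1 → Q j = q * ∑ i ∈ Finset.range (k - j), P i)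
    (hP0 : P 0 = ∏ j ∈ Finset.Icc 1 (k - 1), (1 - Q j))
    (hPi : ∀ i, 1 ≤ i → i ≤ k - 1 →
      P i = q * ∑ j ∈ Finset.range i, P j * ∏ l ∈ Finset.Icc 1 (i - 1 - j), (1 - Q l))
    (hPsum : ∑ i ∈ Finset.range k, P i = 1)
    (p0 : ℝ) (hp0 : p0 = ∑ i ∈ Finset.range k, P i * (p + (i : ℝ) * q))
    :
    p0 ≤ p + (k : ℝ) * (1 - p) * q / (2 * (1 + q)) := by
  rw [hp0]
  exact staSwitch_p0_upper_bound_general hq.1.le hpq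
    (fun i hi => (hPmem i (Nat.le_sub_one_of_lt hi)).1.le)
    (fun j hj hjk => Set.Ioo_subset_Icc_self (hQmem j hj (Nat.le_sub_one_of_lt hjk)))
    (fun i hi hik => (hPi i hi (Nat.le_sub_one_of_lt hik)).le) hPsum
end

section
/- The first expected perturbation probability admits the averaging lower bound q_1 ≥ (1 − p_0 − q_{k−1})/(k−2) + (k−3)·q·P^1/2. (This is the key lower bound on q_1 in the proof of Theorem 3.) -/
/-!
By (i), (iv) and `p + (k-1)q = 1`, we have `1 - p₀ = ∑_{j=1}^{k-1} q_j`, so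
`(1 - p₀ - q_{k-1}) / (k-2)` is the average of `q_1, …, q_{k-2}`. All `q_l` are at most `q`, so
lengthening a product in (iii) by one factor multiplies it by at least `1 - q`; passing from `i` to
`i + 1`, the new summand `P^i` makes up for the lost fraction `q`, whence
`P^1 ≤ P^2 ≤ ⋯ ≤ P^{k-1}`. Therefore `q_1 - q_{j+1}`, which is `q` times a sum of `j` of these
terms, is at least `j q P^1`, and averaging over `j = 0, …, k-3` produces the surplus
`(k-3) q P^1 / 2`.
-/

open Finset

theorem sum_range_sum_range_sub {M : Type*} [AddCommMonoid M] (f : ℕ → M) (n : ℕ) :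
    ∑ j ∈ range n, ∑ i ∈ range (n - j), f i = ∑ i ∈ range n, (n - i) • f i := by
  rw [sum_comm' (t' := range n) (s' := fun i ↦ range (n - i))
    (by simp only [mem_range]; lia)]
  simp only [sum_const, card_range]

theorem sum_range_add_nsmul_le_sum_range {M : Type*} [AddCommMonoid M] [PartialOrder M]
    [IsOrderedAddMonoid M] {f : ℕ → M} {c : M} {m n : ℕ} (hmn : m ≤ n)
    (hc : ∀ i ∈ Ico m n, c ≤ f i) :
    ∑ i ∈ range m, f i + (n - m) • c ≤ ∑ i ∈ range n, f i := by
  rw [← sum_range_add_sum_Ico f hmn, ← Nat.card_Ico m n]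
  gcongr
  exact card_nsmul_le_sum _ _ _ hc

theorem sum_range_div_add_le_of_add_mul_le {K : Type*} [Field K] [LinearOrder K]
    [IsStrictOrderedRing K] {a : ℕ → K} {b c : K} {n : ℕ} (hn : n ≠ 0)
    (ha : ∀ j < n, a j + j * c ≤ b) :
    (∑ j ∈ range n, a j) / n + (n - 1) * c / 2 ≤ b := by
  have hn_pos : (0 : K) < n := by exact_mod_cast Nat.pos_of_ne_zero hn
  have sum_id : ∑ j ∈ range n, (j : K) = n * (n - 1) / 2 := by
    rw [← Nat.cast_sum, sum_range_id, ← Nat.choose_two_right, Nat.cast_choose_two]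
  have sum_le : ∑ j ∈ range n, a j + n * (n - 1) / 2 * c ≤ n * b := by
    calc ∑ j ∈ range n, a j + n * (n - 1) / 2 * c
        = ∑ j ∈ range n, (a j + j * c) := by rw [sum_add_distrib, ← sum_mul, sum_id]
      _ ≤ #(range n) • b := sum_le_card_nsmul _ _ _ fun j hj ↦ ha j (mem_range.1 hj)
      _ = n * b := by rw [card_range, nsmul_eq_mul]
  rw [← le_sub_iff_add_le, div_le_iff₀ hn_pos]
  linarith

section OrderedRing

variable {R : Type*} [CommRing R] [LinearOrder R] [IsStrictOrderedRing R] {q : R}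

theorem one_sub_mul_prod_Icc_le_prod_Icc_succ {Q : ℕ → R} {m : ℕ} (hq1 : q ≤ 1)
    (hQ : ∀ l ∈ Icc 1 (m + 1), Q l ≤ q) :
    (1 - q) * ∏ l ∈ Icc 1 m, (1 - Q l) ≤ ∏ l ∈ Icc 1 (m + 1), (1 - Q l) := by
  have prod_Icc_nonneg : 0 ≤ ∏ l ∈ Icc 1 m, (1 - Q l) := by
    refine prod_nonneg fun l hl ↦ sub_nonneg.2 ((hQ l ?_).trans hq1)
    exact Icc_subset_Icc_right m.le_succ hl
  rw [prod_Icc_succ_top (by lia), mul_comm]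
  gcongr
  exact hQ _ (right_mem_Icc.2 (by lia))

theorem le_succ_of_renewal {P w : ℕ → R} {i : ℕ} (hq0 : 0 ≤ q) (hP : ∀ j < i, 0 ≤ P j)
    (hw0 : w 0 = 1) (hw : ∀ m < i, (1 - q) * w m ≤ w (m + 1))
    (hi : P i = q * ∑ j ∈ range i, P j * w (i - 1 - j))
    (hi_succ : P (i + 1) = q * ∑ j ∈ range (i + 1), P j * w (i - j)) :
    P i ≤ P (i + 1) := by
  have term_le (j : ℕ) (hj : j < i) :
      P j * w (i - 1 - j) ≤ P j * w (i - j) + q * (P j * w (i - 1 - j)) := by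
    have weight_le := hw (i - 1 - j) (by lia)
    rw [show i - 1 - j + 1 = i - j by lia] at weight_le
    linarith [mul_le_mul_of_nonneg_left weight_le (hP j hj)]
  calc P i = q * ∑ j ∈ range i, P j * w (i - 1 - j) := hi
    _ ≤ q * ∑ j ∈ range i, (P j * w (i - j) + q * (P j * w (i - 1 - j))) := by
        gcongr with j hj
        exact term_le j (mem_range.1 hj)
    _ = q * (∑ j ∈ range i, P j * w (i - j) + P i) := by
        rw [sum_add_distrib, ← mul_sum, ← hi]
    _ = P (i + 1) := by rw [hi_succ, sum_range_succ, Nat.sub_self, hw0, mul_one]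

variable {k : ℕ} {P Q : ℕ → R}

theorem staSwitch_Q_le (hq0 : 0 ≤ q) (hP : ∀ i < k, 0 ≤ P i)
    (hQ : ∀ j, 1 ≤ j → j ≤ k - 1 → Q j = q * ∑ i ∈ range (k - j), P i)
    (hPsum : ∑ i ∈ range k, P i = 1) {j : ℕ} (hj1 : 1 ≤ j) (hjk : j ≤ k - 1) :
    Q j ≤ q := by
  have partial_sum_le : ∑ i ∈ range (k - j), P i ≤ 1 := by
    rw [← hPsum]
    exact sum_le_sum_of_subset_of_nonneg (range_mono (k.sub_le j))
      fun i hi _ ↦ hP i (mem_range.1 hi)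
  rw [hQ j hj1 hjk]
  exact mul_le_of_le_one_right hq0 partial_sum_le

theorem staSwitch_monotoneOn_P (hq0 : 0 ≤ q) (hq1 : q ≤ 1) (hP : ∀ i < k, 0 ≤ P i)
    (hQle : ∀ j, 1 ≤ j → j ≤ k - 1 → Q j ≤ q)
    (hPi : ∀ i, 1 ≤ i → i ≤ k - 1 →
      P i = q * ∑ j ∈ range i, P j * ∏ l ∈ Icc 1 (i - 1 - j), (1 - Q l)) :
    MonotoneOn P (Set.Ico 1 k) := by
  refine monotoneOn_of_le_succ Set.ordConnected_Ico fun i _ ⟨hi1, _⟩ ⟨_, hik⟩ ↦ ?_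
  rw [Nat.succ_eq_succ, Nat.succ_eq_add_one] at hik ⊢
  refine le_succ_of_renewal (w := fun m ↦ ∏ l ∈ Icc 1 m, (1 - Q l)) hq0
    (fun j hj ↦ hP j (by lia)) (by simp) (fun m hm ↦ ?_)
    (hPi i hi1 (by lia)) (hPi (i + 1) (by lia) (by lia))
  refine one_sub_mul_prod_Icc_le_prod_Icc_succ hq1 fun l hl ↦ ?_
  obtain ⟨hl1, hlm⟩ := mem_Icc.1 hl
  exact hQle l hl1 (by lia)

theorem staSwitch_Q_succ_add_le_Q_one (hq0 : 0 ≤ q)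
    (hQ : ∀ j, 1 ≤ j → j ≤ k - 1 → Q j = q * ∑ i ∈ range (k - j), P i)
    (hmono : MonotoneOn P (Set.Ico 1 k)) {j : ℕ} (hj : j < k - 1) :
    Q (j + 1) + j * (q * P 1) ≤ Q 1 := by
  have sum_gap : ∑ i ∈ range (k - (j + 1)), P i + j * P 1 ≤ ∑ i ∈ range (k - 1), P i := by
    have P_one_le : ∀ i ∈ Ico (k - (j + 1)) (k - 1), P 1 ≤ P i := fun i hi ↦ by
      obtain ⟨hi_ge, hi_lt⟩ := mem_Ico.1 hi
      exact hmono ⟨le_rfl, by lia⟩ ⟨by lia, by lia⟩ (by lia)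
    have := sum_range_add_nsmul_le_sum_range (by lia) P_one_le
    rwa [show k - 1 - (k - (j + 1)) = j by lia, nsmul_eq_mul] at this
  rw [hQ 1 le_rfl (by lia), hQ (j + 1) (by lia) (by lia)]
  linarith [mul_le_mul_of_nonneg_left sum_gap hq0]

end OrderedRing

theorem staSwitch_one_sub_p0_eq_sum_Q {R : Type*} [CommRing R] {k : ℕ} (hk : 1 ≤ k) {p q : R}
    {P Q : ℕ → R} (hpq : p + (k - 1 : R) * q = 1)
    (hQ : ∀ j, 1 ≤ j → j ≤ k - 1 → Q j = q * ∑ i ∈ range (k - j), P i)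
    (hPsum : ∑ i ∈ range k, P i = 1) :
    1 - ∑ i ∈ range k, P i * (p + i * q) = ∑ j ∈ range (k - 1), Q (j + 1) := by
  obtain ⟨n, rfl⟩ := Nat.exists_eq_add_of_le' hk
  rw [Nat.add_sub_cancel] at hQ ⊢
  have sum_Q : ∑ j ∈ range n, Q (j + 1) = q * ∑ i ∈ range n, (n - i) • P i := by
    rw [← sum_range_sum_range_sub, mul_sum]
    refine sum_congr rfl fun j hj ↦ ?_
    rw [hQ (j + 1) (by lia) (mem_range.1 hj), Nat.add_sub_add_right]
  calc 1 - ∑ i ∈ range (n + 1), P i * (p + i * q)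
      = ∑ i ∈ range (n + 1), q * ((n - i) • P i) := by
        rw [← hPsum, ← sum_sub_distrib]
        refine sum_congr rfl fun i hi ↦ ?_
        rw [nsmul_eq_mul, Nat.cast_sub (Nat.lt_succ_iff.1 (mem_range.1 hi))]
        push_cast at hpq
        linear_combination -P i * hpq
    _ = ∑ j ∈ range n, Q (j + 1) := by
        rw [sum_range_succ, Nat.sub_self, zero_smul, mul_zero, add_zero, sum_Q, mul_sum]

theorem staSwitch_q1_lower_bound_general {K : Type*} [Field K] [LinearOrder K]
    [IsStrictOrderedRing K] {k : ℕ} (hk : 3 ≤ k) {p q : K} (hq0 : 0 ≤ q) (hq1 : q ≤ 1)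
    (hpq : p + (k - 1 : K) * q = 1) {P Q : ℕ → K} (hP : ∀ i < k, 0 ≤ P i)
    (hQ : ∀ j, 1 ≤ j → j ≤ k - 1 → Q j = q * ∑ i ∈ range (k - j), P i)
    (hPi : ∀ i, 1 ≤ i → i ≤ k - 1 →
      P i = q * ∑ j ∈ range i, P j * ∏ l ∈ Icc 1 (i - 1 - j), (1 - Q l))
    (hPsum : ∑ i ∈ range k, P i = 1) {p0 : K}
    (hp0 : p0 = ∑ i ∈ range k, P i * (p + i * q)) :
    (1 - p0 - Q (k - 1)) / ((k : K) - 2) + ((k : K) - 3) * q * P 1 / 2 ≤ Q 1 := by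
  have hmono : MonotoneOn P (Set.Ico 1 k) :=
    staSwitch_monotoneOn_P hq0 hq1 hP (fun _ ↦ staSwitch_Q_le hq0 hP hQ hPsum) hPi
  have sum_Q : 1 - p0 - Q (k - 1) = ∑ j ∈ range (k - 2), Q (j + 1) := by
    rw [hp0, staSwitch_one_sub_p0_eq_sum_Q (by lia) hpq hQ hPsum,
      show k - 1 = k - 2 + 1 by lia, sum_range_succ, add_sub_cancel_right]
  have average_le : (∑ j ∈ range (k - 2), Q (j + 1)) / ((k - 2 : ℕ) : K)
      + (((k - 2 : ℕ) : K) - 1) * (q * P 1) / 2 ≤ Q 1 :=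
    sum_range_div_add_le_of_add_mul_le (by lia) fun j hj ↦
      staSwitch_Q_succ_add_le_Q_one hq0 hQ hmono (by lia)
  rw [← sum_Q, Nat.cast_sub (by lia), Nat.cast_ofNat] at average_le
  linarith

/-- key lower bound on `q_1` in the proof of Theorem 3:
`q_1 ≥ (1 − p_0 − q_{k−1})/(k−2) + (k−3)·q·P^1/2`. -/
theorem staSwitch_q1_lower_bound
    (k : ℕ) (hk : 3 ≤ k) (p q : ℝ)
    (hp : p ∈ Set.Ioo (0 : ℝ) 1) (hq : q ∈ Set.Ioo (0 : ℝ) 1)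
    (hpq : p + (k - 1 : ℝ) * q = 1)
    (P Q : ℕ → ℝ)
    (hPmem : ∀ i, i ≤ k - 1 → P i ∈ Set.Ioo (0 : ℝ) 1)
    (hQmem : ∀ j, 1 ≤ j → j ≤ k - 1 → Q j ∈ Set.Ioo (0 : ℝ) 1)
    (hQ : ∀ j, 1 ≤ j → j ≤ k - 1 → Q j = q * ∑ i ∈ Finset.range (k - j), P i)
    (hP0 : P 0 = ∏ j ∈ Finset.Icc 1 (k - 1), (1 - Q j))
    (hPi : ∀ i, 1 ≤ i → i ≤ k - 1 →
      P i = q * ∑ j ∈ Finset.range i, P j * ∏ l ∈ Finset.Icc 1 (i - 1 - j), (1 - Q l))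
    (hPsum : ∑ i ∈ Finset.range k, P i = 1)
    (p0 : ℝ) (hp0 : p0 = ∑ i ∈ Finset.range k, P i * (p + (i : ℝ) * q))
    :
    (1 - p0 - Q (k - 1)) / ((k : ℝ) - 2) + ((k : ℝ) - 3) * q * P 1 / 2 ≤ Q 1 := by
  exact staSwitch_q1_lower_bound_general hk hq.1.le hq.2.le hpq
    (fun i hi ↦ (hPmem i (by lia)).1.le) hQ hPi hPsum hp0
end

section
/- The zero-delay probability satisfies (1−q)^{k−1} ≤ P^0 ≤ 1/(2−p); consequently q_{k−1} = q·P^0 ≤ q/(2−p) and P^1 = q·P^0 ≥ q·(1−q)^{k−1}. -/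
/-!
The delay probabilities solve a renewal equation `P (n + 1) = q * (P ⋆ S) n`, where `⋆` is the
convolution of sequences and `S m = (1 - Q 1) ⋯ (1 - Q m)`. Since the `P i` sum to `1`, every `Q j`
is at most `q`; so `S` loses at most a factor `1 - q` per step, which gives the lower bound on
`P 0 = S (k - 1)`. The same decay bound yields
`(P ⋆ S) (n + 1) ≥ (1 - q) * (P ⋆ S) n + P (n + 1) = (P ⋆ S) n`, so `P 1, P 2, …` increases from
`P 1 = q * P 0`. Summing, `1 ≥ P 0 + (k - 1) * q * P 0 = (2 - p) * P 0`.
-/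

open Finset

namespace StaSwitch

variable {R : Type*} [CommRing R]

/-- The Cauchy product `∑ j ≤ n, u j * s (n - j)` of two sequences, which is the right-hand side of
a discrete renewal equation for `u` with kernel `s`. -/
def seqConv (u s : ℕ → R) (n : ℕ) : R :=
  ∑ j ∈ range (n + 1), u j * s (n - j)

/-- The probability `(1 - Q 1) ⋯ (1 - Q m)` of surviving `m` independent trials with failure
probabilities `Q 1, …, Q m`; `Q 0` is ignored. -/
def survival (Q : ℕ → R) (m : ℕ) : R :=
  ∏ l ∈ Icc 1 m, (1 - Q l)

theorem seqConv_zero (u s : ℕ → R) : seqConv u s 0 = u 0 * s 0 := by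
  simp [seqConv]

theorem survival_zero (Q : ℕ → R) : survival Q 0 = 1 := by
  simp [survival]

theorem survival_succ (Q : ℕ → R) (m : ℕ) :
    survival Q (m + 1) = survival Q m * (1 - Q (m + 1)) :=
  prod_Icc_succ_top (Nat.le_add_left 1 m) _

variable [PartialOrder R] [IsOrderedRing R] {N : ℕ} {c : R}

section Survival

variable {Q : ℕ → R}

theorem one_sub_pow_le_survival (hc : c ≤ 1) (hQ : ∀ j ∈ Icc 1 N, Q j ≤ c) :
    (1 - c) ^ N ≤ survival Q N :=
  calc (1 - c) ^ N = ∏ _j ∈ Icc 1 N, (1 - c) := by simp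
    _ ≤ survival Q N :=
      prod_le_prod (fun _ _ => sub_nonneg.2 hc) fun j hj => sub_le_sub_left (hQ j hj) 1

theorem one_sub_mul_survival_le_survival_succ (hc : c ≤ 1) (hQ : ∀ j ∈ Icc 1 N, Q j ≤ c)
    {m : ℕ} (hm : m < N) : (1 - c) * survival Q m ≤ survival Q (m + 1) := by
  have survival_nonneg : 0 ≤ survival Q m :=
    (pow_nonneg (sub_nonneg.2 hc) m).trans <|
      one_sub_pow_le_survival hc fun j hj => hQ j (Icc_subset_Icc_right hm.le hj)
  rw [survival_succ, mul_comm]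
  exact mul_le_mul_of_nonneg_left
    (sub_le_sub_left (hQ _ (mem_Icc.2 ⟨Nat.le_add_left 1 m, hm⟩)) 1) survival_nonneg

end Survival

section Renewal

variable {u s : ℕ → R}

theorem one_sub_mul_seqConv_add_le_seqConv_succ {n : ℕ} (hu : ∀ j ≤ n, 0 ≤ u j)
    (hs : ∀ m ≤ n, (1 - c) * s m ≤ s (m + 1)) :
    (1 - c) * seqConv u s n + u (n + 1) * s 0 ≤ seqConv u s (n + 1) := by
  rw [seqConv, seqConv, sum_range_succ _ (n + 1), Nat.sub_self, mul_sum]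
  refine add_le_add_left (sum_le_sum fun j hj => ?_) _
  have hjn : j ≤ n := Nat.lt_succ_iff.1 (mem_range.1 hj)
  rw [mul_left_comm, Nat.succ_sub hjn]
  exact mul_le_mul_of_nonneg_left (hs _ (Nat.sub_le n j)) (hu j hjn)

theorem apply_zero_le_seqConv_of_renewal (hu : ∀ j < N, 0 ≤ u j) (hs₀ : s 0 = 1)
    (hs : ∀ m < N, (1 - c) * s m ≤ s (m + 1))
    (hrenewal : ∀ n < N, u (n + 1) = c * seqConv u s n) {n : ℕ} (hn : n ≤ N) :
    u 0 ≤ seqConv u s n := by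
  induction n with
  | zero => rw [seqConv_zero, hs₀, mul_one]
  | succ n ih =>
    calc u 0 ≤ seqConv u s n := ih (Nat.le_of_succ_le hn)
      _ = (1 - c) * seqConv u s n + u (n + 1) * s 0 := by rw [hrenewal n hn, hs₀]; ring
      _ ≤ seqConv u s (n + 1) :=
        one_sub_mul_seqConv_add_le_seqConv_succ (fun j hj => hu j (by lia))
          fun m hm => hs m (by lia)

theorem apply_zero_mul_one_add_le_sum_of_renewal (hc : 0 ≤ c) (hu : ∀ j < N, 0 ≤ u j)
    (hs₀ : s 0 = 1) (hs : ∀ m < N, (1 - c) * s m ≤ s (m + 1))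
    (hrenewal : ∀ n < N, u (n + 1) = c * seqConv u s n) :
    u 0 * (1 + N * c) ≤ ∑ i ∈ range (N + 1), u i :=
  calc u 0 * (1 + N * c) = ∑ _n ∈ range N, c * u 0 + u 0 := by
        rw [sum_const, card_range, nsmul_eq_mul]; ring
    _ ≤ ∑ n ∈ range N, u (n + 1) + u 0 := by
        gcongr with n hn
        have hn : n < N := mem_range.1 hn
        rw [hrenewal n hn]
        exact mul_le_mul_of_nonneg_left
          (apply_zero_le_seqConv_of_renewal hu hs₀ hs hrenewal hn.le) hc
    _ = ∑ i ∈ range (N + 1), u i := (sum_range_succ' u N).symm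

end Renewal

theorem mul_sum_range_le_of_sum_eq_one {u : ℕ → R} {m n : ℕ} (hc : 0 ≤ c) (hmn : m ≤ n)
    (hu : ∀ i < n, 0 ≤ u i) (hsum : ∑ i ∈ range n, u i = 1) :
    c * ∑ i ∈ range m, u i ≤ c := by
  refine mul_le_of_le_one_right hc (hsum ▸ ?_)
  exact sum_le_sum_of_subset_of_nonneg (range_mono hmn) fun i hi _ => hu i (mem_range.1 hi)

end StaSwitch

open StaSwitch

/-- the zero-delay probability satisfies `(1−q)^{k−1} ≤ P^0 ≤ 1/(2−p)`;
consequently `q_{k−1} = q·P^0 ≤ q/(2−p)` and `P^1 = q·P^0 ≥ q·(1−q)^{k−1}`. -/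
theorem staSwitch_P0_bounds
    (k : ℕ) (hk : 3 ≤ k) (p q : ℝ)
    (hp : p ∈ Set.Ioo (0 : ℝ) 1) (hq : q ∈ Set.Ioo (0 : ℝ) 1)
    (hpq : p + (k - 1 : ℝ) * q = 1)
    (P Q : ℕ → ℝ)
    (hPmem : ∀ i, i ≤ k - 1 → P i ∈ Set.Ioo (0 : ℝ) 1)
    (hQmem : ∀ j, 1 ≤ j → j ≤ k - 1 → Q j ∈ Set.Ioo (0 : ℝ) 1)
    (hQ : ∀ j, 1 ≤ j → j ≤ k - 1 → Q j = q * ∑ i ∈ Finset.range (k - j), P i)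
    (hP0 : P 0 = ∏ j ∈ Finset.Icc 1 (k - 1), (1 - Q j))
    (hPi : ∀ i, 1 ≤ i → i ≤ k - 1 →
      P i = q * ∑ j ∈ Finset.range i, P j * ∏ l ∈ Finset.Icc 1 (i - 1 - j), (1 - Q l))
    (hPsum : ∑ i ∈ Finset.range k, P i = 1)
    (p0 : ℝ) (hp0 : p0 = ∑ i ∈ Finset.range k, P i * (p + (i : ℝ) * q))
    :
    (1 - q) ^ (k - 1) ≤ P 0 ∧ P 0 ≤ 1 / (2 - p) ∧
    Q (k - 1) = q * P 0 ∧ Q (k - 1) ≤ q / (2 - p) ∧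
    P 1 = q * P 0 ∧ q * (1 - q) ^ (k - 1) ≤ P 1 := by
  obtain ⟨N, rfl⟩ : ∃ N, k = N + 1 := ⟨k - 1, by lia⟩
  simp only [Nat.add_sub_cancel] at *
  have P_nonneg : ∀ i ≤ N, 0 ≤ P i := fun i hi => (hPmem i hi).1.le
  have Q_le : ∀ j ∈ Icc 1 N, Q j ≤ q := fun j hj => by
    rw [hQ j (mem_Icc.1 hj).1 (mem_Icc.1 hj).2]
    exact mul_sum_range_le_of_sum_eq_one hq.1.le (Nat.sub_le _ j)
      (fun i hi => P_nonneg i (by lia)) hPsum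
  have lower : (1 - q) ^ N ≤ P 0 := hP0 ▸ one_sub_pow_le_survival hq.2.le Q_le
  have upper : P 0 ≤ 1 / (2 - p) := by
    have two_sub_p : 2 - p = 1 + N * q := by push_cast at hpq; linarith
    rw [le_div_iff₀ (by linarith [hp.2]), two_sub_p]
    exact (apply_zero_mul_one_add_le_sum_of_renewal hq.1.le
      (fun i hi => P_nonneg i hi.le) (survival_zero Q)
      (fun m => one_sub_mul_survival_le_survival_succ hq.2.le Q_le)
      fun n hn => hPi (n + 1) (Nat.le_add_left 1 n) hn).trans_eq hPsum
  have Q_last : Q N = q * P 0 := by simpa using hQ N (by lia) le_rfl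
  have P_one : P 1 = q * P 0 := by simpa using hPi 1 le_rfl (by lia)
  refine ⟨lower, upper, Q_last, ?_, P_one, ?_⟩
  · rw [Q_last, div_eq_mul_one_div]
    exact mul_le_mul_of_nonneg_left upper hq.1.le
  · exact P_one ▸ mul_le_mul_of_nonneg_left lower hq.1.le
end

section
/- Let δ = max{𝒫_{1−k}, 𝒫_{2−k}, …, 𝒫_{−1}}. Then the worst-case likelihood ratio of StaSwitch satisfies (𝒫_0² − δ)·q·q_1·(p + q + 1 − p_0 − q_{k−1}) ≤ (p² − q_1·(p² − p + 2))·𝒫_1·𝒫_{−1}. (This is the core inequality in the proof of Theorem 3, which bounds the privacy budget ε ≤ ln((𝒫_0² − δ)/(𝒫_1·𝒫_{−1})) of StaSwitch.) -/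
/-!
Write `S = p + q + q_1 + ⋯ + q_{k-2}`, `x = q_1` and `a = 𝒫_{-1}`. The allocating probabilities in
the inequality have closed forms: `𝒫_0 = p P^0`, `𝒫_1 = q P^0 S` and `(1 - x) a = x P^0`, and the
identity `q_1 + ⋯ + q_{k-1} = 1 - p_0` gives `S = p + q + 1 - p_0 - q_{k-1}`. After cancelling
`q S ≥ 0` and splitting `p² - x (p² - p + 2) = p² (1 - x) - x (2 - p)`, the claim becomes
`x (p P^0)² - x δ ≤ x (p P^0)² - x (2 - p) P^0 a`. As `a ≤ δ`, it suffices that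
`(2 - p) P^0 ≤ 1`. Since `q_j ≤ q`, the recursion for `P^i` forces `P^i ≥ q P^0` for `i ≥ 1`;
summing over `i` gives `(1 + (k - 1) q) P^0 ≤ 1`, and `1 + (k - 1) q = 2 - p`.
-/

open Finset

theorem Icc_one_pred_eq_Ico (k : ℕ) : Icc 1 (k - 1) = Ico 1 k := by
  ext
  simp only [mem_Icc, mem_Ico]
  omega

theorem prod_Icc_one_pred_reflect {M : Type*} [CommMonoid M] (f : ℕ → M) (k : ℕ) :
    ∏ j ∈ Icc 1 (k - 1), f (k - j) = ∏ j ∈ Icc 1 (k - 1), f j := by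
  rw [Icc_one_pred_eq_Ico, prod_Ico_reflect f 1 k.le_succ, Nat.add_sub_cancel_left,
    Nat.add_sub_cancel]

theorem sum_Icc_one_pred_reflect {M : Type*} [AddCommMonoid M] (f : ℕ → M) (k : ℕ) :
    ∑ j ∈ Icc 1 (k - 1), f (k - j) = ∑ j ∈ Icc 1 (k - 1), f j := by
  rw [Icc_one_pred_eq_Ico, sum_Ico_reflect f 1 k.le_succ, Nat.add_sub_cancel_left,
    Nat.add_sub_cancel]

theorem sum_Icc_one_sum_range {R : Type*} [CommRing R] (f : ℕ → R) (n : ℕ) :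
    ∑ m ∈ Icc 1 n, ∑ i ∈ range m, f i = ∑ i ∈ range (n + 1), f i * ((n : R) - i) := by
  induction n with
  | zero => simp
  | succ n ih =>
    rw [sum_Icc_succ_top (Nat.le_add_left 1 n), ih, sum_range_succ _ (n + 1), sub_self, mul_zero,
      add_zero, ← sum_add_distrib]
    refine sum_congr rfl fun i _ => ?_
    push_cast
    ring

section Convolution

variable {R : Type*} [CommRing R] [LinearOrder R] [IsStrictOrderedRing R] {q : R} {a w : ℕ → R}

theorem convolution_le_convolution_succ {i : ℕ} (ha : ∀ j ≤ i, 0 ≤ a j) (hw0 : w 0 = 1)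
    (hw : ∀ m ≤ i, (1 - q) * w m ≤ w (m + 1))
    (hrec : q * ∑ j ∈ range (i + 1), a j * w (i - j) ≤ a (i + 1)) :
    ∑ j ∈ range (i + 1), a j * w (i - j) ≤ ∑ j ∈ range (i + 2), a j * w (i + 1 - j) := by
  have hdecay : (1 - q) * ∑ j ∈ range (i + 1), a j * w (i - j) ≤
      ∑ j ∈ range (i + 1), a j * w (i + 1 - j) := by
    rw [mul_sum]
    refine sum_le_sum fun j hj => ?_
    have hji : j ≤ i := mem_range_succ_iff.1 hj
    rw [mul_left_comm, Nat.succ_sub hji]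
    exact mul_le_mul_of_nonneg_left (hw _ (Nat.sub_le i j)) (ha j hji)
  rw [sum_range_succ _ (i + 1), Nat.sub_self, hw0]
  linarith

theorem head_le_convolution {n : ℕ} (ha : ∀ j < n, 0 ≤ a j) (hw0 : w 0 = 1)
    (hw : ∀ m < n, (1 - q) * w m ≤ w (m + 1))
    (hrec : ∀ i < n, q * ∑ j ∈ range (i + 1), a j * w (i - j) ≤ a (i + 1)) {i : ℕ} (hi : i ≤ n) :
    a 0 ≤ ∑ j ∈ range (i + 1), a j * w (i - j) := by
  induction i with
  | zero => simp [hw0]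
  | succ i ih =>
    exact (ih (by omega)).trans <| convolution_le_convolution_succ (fun j hj => ha j (by omega))
      hw0 (fun m hm => hw m (by omega)) (hrec i hi)

end Convolution

/-- The probability `(1 - q_1) ⋯ (1 - q_m)` that none of the first `m` switches takes place. -/
def noSwitchProb (Q : ℕ → ℝ) (m : ℕ) : ℝ :=
  ∏ l ∈ Icc 1 m, (1 - Q l)

theorem noSwitchProb_zero (Q : ℕ → ℝ) : noSwitchProb Q 0 = 1 := by
  simp [noSwitchProb]

theorem noSwitchProb_succ (Q : ℕ → ℝ) (m : ℕ) :
    noSwitchProb Q (m + 1) = noSwitchProb Q m * (1 - Q (m + 1)) :=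
  prod_Icc_succ_top (Nat.le_add_left 1 m) _

/-- The StaSwitch fixed-point equations (i)–(iv) for a probability distribution `P` on
`{0, …, k - 1}` and switching probabilities `Q 1, …, Q (k - 1)`. The values of `P` and `Q` at other
indices are irrelevant. -/
structure IsStaSwitchFixedPoint (k : ℕ) (q : ℝ) (P Q : ℕ → ℝ) : Prop where
  nonneg : ∀ i < k, 0 ≤ P i
  switch_eq : ∀ j, 1 ≤ j → j ≤ k - 1 → Q j = q * ∑ i ∈ range (k - j), P i
  head_eq : P 0 = noSwitchProb Q (k - 1)
  tail_eq : ∀ i, 1 ≤ i → i ≤ k - 1 →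
    P i = q * ∑ j ∈ range i, P j * noSwitchProb Q (i - 1 - j)
  sum_eq_one : ∑ i ∈ range k, P i = 1

namespace IsStaSwitchFixedPoint

variable {k : ℕ} {p q : ℝ} {P Q : ℕ → ℝ}

theorem pos (h : IsStaSwitchFixedPoint k q P Q) : 0 < k := by
  by_contra hk
  simpa [Nat.eq_zero_of_not_pos hk] using h.sum_eq_one

theorem switch_nonneg (h : IsStaSwitchFixedPoint k q P Q)
    (hq : 0 ≤ q) {j : ℕ} (hj : 1 ≤ j) (hjk : j ≤ k - 1) :
    0 ≤ Q j := by
  rw [h.switch_eq j hj hjk]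
  exact mul_nonneg hq <| sum_nonneg fun i hi => h.nonneg i (by rw [mem_range] at hi; omega)

theorem switch_le (h : IsStaSwitchFixedPoint k q P Q)
    (hq : 0 ≤ q) {j : ℕ} (hj : 1 ≤ j) (hjk : j ≤ k - 1) :
    Q j ≤ q := by
  have hsum : ∑ i ∈ range (k - j), P i ≤ 1 := h.sum_eq_one ▸
    sum_le_sum_of_subset_of_nonneg (range_subset_range.2 (Nat.sub_le k j))
      fun i hi _ => h.nonneg i (mem_range.1 hi)
  rw [h.switch_eq j hj hjk]
  exact mul_le_of_le_one_right hq hsum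

theorem noSwitchProb_nonneg (h : IsStaSwitchFixedPoint k q P Q)
    (hq : q ∈ Set.Icc 0 1) {m : ℕ} (hm : m ≤ k - 1) :
    0 ≤ noSwitchProb Q m := by
  refine prod_nonneg fun l hl => ?_
  rw [mem_Icc] at hl
  exact sub_nonneg.2 ((h.switch_le hq.1 hl.1 (hl.2.trans hm)).trans hq.2)

theorem one_sub_mul_noSwitchProb_le (h : IsStaSwitchFixedPoint k q P Q)
    (hq : q ∈ Set.Icc 0 1) {m : ℕ} (hm : m < k - 1) :
    (1 - q) * noSwitchProb Q m ≤ noSwitchProb Q (m + 1) := by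
  rw [noSwitchProb_succ, mul_comm]
  exact mul_le_mul_of_nonneg_left (sub_le_sub_left (h.switch_le hq.1 (Nat.le_add_left 1 m) hm) 1)
    (h.noSwitchProb_nonneg hq hm.le)

theorem mul_head_le_succ (h : IsStaSwitchFixedPoint k q P Q)
    (hq : q ∈ Set.Icc 0 1) {i : ℕ} (hi : i < k - 1) :
    q * P 0 ≤ P (i + 1) := by
  have hrec : ∀ i < k - 1, P (i + 1) = q * ∑ j ∈ range (i + 1), P j * noSwitchProb Q (i - j) :=
    fun i hi => h.tail_eq (i + 1) (Nat.le_add_left 1 i) hi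
  rw [hrec i hi]
  exact mul_le_mul_of_nonneg_left
    (head_le_convolution (fun j hj => h.nonneg j (by omega)) (noSwitchProb_zero Q)
      (fun m hm => h.one_sub_mul_noSwitchProb_le hq hm) (fun i hi => (hrec i hi).ge) hi.le) hq.1

theorem one_add_mul_head_le_one (h : IsStaSwitchFixedPoint k q P Q) (hq : q ∈ Set.Icc 0 1) :
    (1 + (k - 1) * q) * P 0 ≤ 1 := by
  obtain ⟨n, rfl⟩ := Nat.exists_eq_add_of_lt h.pos
  have htail : ∑ _i ∈ range n, q * P 0 ≤ ∑ i ∈ range n, P (i + 1) :=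
    sum_le_sum fun i hi => h.mul_head_le_succ hq (by rw [mem_range] at hi; omega)
  have hsum := h.sum_eq_one
  rw [zero_add, sum_range_succ'] at hsum
  rw [sum_const, card_range, nsmul_eq_mul] at htail
  push_cast
  linarith

theorem two_sub_mul_head_le_one (h : IsStaSwitchFixedPoint k q P Q)
    (hq : q ∈ Set.Icc 0 1) (hpq : p + (k - 1) * q = 1) :
    (2 - p) * P 0 ≤ 1 := by
  have hp : 2 - p = 1 + (k - 1) * q := by linarith
  exact hp ▸ h.one_add_mul_head_le_one hq

theorem sum_switch_eq (h : IsStaSwitchFixedPoint k q P Q) (hpq : p + (k - 1) * q = 1) :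
    ∑ j ∈ Icc 1 (k - 1), Q j = 1 - ∑ i ∈ range k, P i * (p + i * q) := by
  have hcast : ((k - 1 : ℕ) : ℝ) = k - 1 := Nat.cast_pred h.pos
  calc ∑ j ∈ Icc 1 (k - 1), Q j
      = q * ∑ j ∈ Icc 1 (k - 1), ∑ i ∈ range (k - j), P i := by
        rw [mul_sum]
        exact sum_congr rfl fun j hj => h.switch_eq j (mem_Icc.1 hj).1 (mem_Icc.1 hj).2
    _ = q * ∑ i ∈ range k, P i * ((k - 1 : ℝ) - i) := by
        rw [sum_Icc_one_pred_reflect (fun m => ∑ i ∈ range m, P i), sum_Icc_one_sum_range, hcast,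
          Nat.sub_add_cancel h.pos]
    _ = 1 - ∑ i ∈ range k, P i * (p + i * q) := by
        rw [eq_sub_iff_add_eq, mul_sum, ← sum_add_distrib]
        refine (sum_congr rfl fun i _ => ?_).trans h.sum_eq_one
        linear_combination P i * hpq

theorem sum_switch_init_eq (h : IsStaSwitchFixedPoint k q P Q)
    (hk : 2 ≤ k) (hpq : p + (k - 1) * q = 1) :
    ∑ j ∈ Icc 1 (k - 2), Q j = 1 - ∑ i ∈ range k, P i * (p + i * q) - Q (k - 1) := by
  have hlast : k - 2 + 1 = k - 1 := by omega
  rw [← h.sum_switch_eq hpq, ← hlast, sum_Icc_succ_top (Nat.le_add_left 1 _), add_sub_cancel_right]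

theorem sum_switch_init_nonneg (h : IsStaSwitchFixedPoint k q P Q) (hq : 0 ≤ q) :
    0 ≤ ∑ j ∈ Icc 1 (k - 2), Q j :=
  sum_nonneg fun _ hj =>
    h.switch_nonneg hq (mem_Icc.1 hj).1 ((mem_Icc.1 hj).2.trans (by omega))

end IsStaSwitchFixedPoint

/-- `A j` is the allocating probability `𝒫_j` of StaSwitch for `-(k - 1) ≤ j ≤ k - 1`; the values
of `A` outside this range are irrelevant. -/
structure IsStaSwitchAllocation (k : ℕ) (p q : ℝ) (P Q : ℕ → ℝ) (A : ℤ → ℝ) : Prop where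
  neg : ∀ j : ℕ, 1 ≤ j → j ≤ k - 1 →
    A ((j : ℤ) - (k : ℤ)) = Q (k - j) * ∏ i ∈ Icc 1 (j - 1), (1 - Q (k - i))
  zero : A 0 = p * ∏ j ∈ Icc 1 (k - 1), (1 - Q (k - j))
  pos : ∀ j : ℕ, 1 ≤ j → j ≤ k - 1 →
    A (j : ℤ) = q * ∑ l ∈ range j, P l *
      ((p + (j : ℝ) * q) * ∏ i ∈ Icc 1 (j - l - 1), (1 - Q i)
        + ∑ i ∈ Icc 1 (k - j - 1), Q i * ∏ r ∈ Icc 1 (j - l - 1), (1 - Q (r + i)))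

namespace IsStaSwitchAllocation

variable {k : ℕ} {p q : ℝ} {P Q : ℕ → ℝ} {A : ℤ → ℝ}

theorem zero_eq (hA : IsStaSwitchAllocation k p q P Q A) : A 0 = p * noSwitchProb Q (k - 1) := by
  rw [hA.zero, prod_Icc_one_pred_reflect (fun j => 1 - Q j), noSwitchProb]

theorem one_eq (hA : IsStaSwitchAllocation k p q P Q A) (hk : 2 ≤ k) :
    A 1 = q * P 0 * (p + q + ∑ j ∈ Icc 1 (k - 2), Q j) := by
  have hone := hA.pos 1 le_rfl (by omega)
  simp only [range_one, sum_singleton, Nat.sub_self, Icc_eq_empty_of_lt Nat.zero_lt_one,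
    prod_empty, mul_one, Nat.cast_one, one_mul, Nat.sub_sub] at hone
  rw [hone, mul_assoc]

theorem one_sub_mul_neg_one_eq (hA : IsStaSwitchAllocation k p q P Q A) (hk : 2 ≤ k) :
    (1 - Q 1) * A (-1) = Q 1 * noSwitchProb Q (k - 1) := by
  obtain ⟨n, rfl⟩ := Nat.exists_eq_add_of_le' hk
  have hneg : A (-1) = Q 1 * ∏ i ∈ Icc 1 n, (1 - Q (n + 2 - i)) := by
    have hindex : ((n + 1 : ℕ) : ℤ) - ((n + 2 : ℕ) : ℤ) = -1 := by omega
    simpa only [hindex, Nat.add_sub_cancel, Nat.add_sub_add_left] using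
      hA.neg (n + 1) (Nat.le_add_left 1 n) le_rfl
  have hprod : noSwitchProb Q (n + 2 - 1) = (∏ i ∈ Icc 1 n, (1 - Q (n + 2 - i))) * (1 - Q 1) := by
    rw [noSwitchProb, ← prod_Icc_one_pred_reflect (fun j => 1 - Q j), Nat.add_succ_sub_one,
      prod_Icc_succ_top (Nat.le_add_left 1 n), Nat.add_sub_add_left]
  rw [hneg, hprod]
  ring

end IsStaSwitchAllocation

theorem sq_sub_mul_le_of_two_sub_mul_le_one {R : Type*} [CommRing R] [LinearOrder R]
    [IsStrictOrderedRing R] {p x c a δ : R} (hx : x ∈ Set.Ico 0 1) (hc0 : 0 ≤ c)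
    (hac : (1 - x) * a = x * c) (haδ : a ≤ δ) (hc : (2 - p) * c ≤ 1) :
    ((p * c) ^ 2 - δ) * x ≤ (p ^ 2 - x * (p ^ 2 - p + 2)) * (c * a) := by
  obtain ⟨hx0, hx1⟩ := hx
  have ha : 0 ≤ a := nonneg_of_mul_nonneg_right (hac ▸ mul_nonneg hx0 hc0) (sub_pos.2 hx1)
  calc ((p * c) ^ 2 - δ) * x
      ≤ ((p * c) ^ 2 - a) * x := by gcongr
    _ = p ^ 2 * c * (x * c) - x * a * 1 := by ring
    _ ≤ p ^ 2 * c * (x * c) - x * a * ((2 - p) * c) := by gcongr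
    _ = p ^ 2 * c * ((1 - x) * a) - x * a * ((2 - p) * c) := by rw [hac]
    _ = (p ^ 2 - x * (p ^ 2 - p + 2)) * (c * a) := by ring

/-- core inequality in the proof of Theorem 3: with
`δ = max {𝒫_{1−k}, …, 𝒫_{−1}}`, the worst-case likelihood ratio of StaSwitch satisfies
`(𝒫_0² − δ)·q·q_1·(p + q + 1 − p_0 − q_{k−1}) ≤ (p² − q_1(p² − p + 2))·𝒫_1·𝒫_{−1}`,
which bounds the privacy budget `ε ≤ ln((𝒫_0² − δ)/(𝒫_1·𝒫_{−1}))` of StaSwitch. -/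
theorem staSwitch_privacy_core_inequality
    (k : ℕ) (hk : 3 ≤ k) (p q : ℝ)
    (hp : p ∈ Set.Ioo (0 : ℝ) 1) (hq : q ∈ Set.Ioo (0 : ℝ) 1)
    (hpq : p + (k - 1 : ℝ) * q = 1)
    (P Q : ℕ → ℝ)
    (hPmem : ∀ i, i ≤ k - 1 → P i ∈ Set.Ioo (0 : ℝ) 1)
    (hQmem : ∀ j, 1 ≤ j → j ≤ k - 1 → Q j ∈ Set.Ioo (0 : ℝ) 1)
    (hQ : ∀ j, 1 ≤ j → j ≤ k - 1 → Q j = q * ∑ i ∈ Finset.range (k - j), P i)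
    (hP0 : P 0 = ∏ j ∈ Finset.Icc 1 (k - 1), (1 - Q j))
    (hPi : ∀ i, 1 ≤ i → i ≤ k - 1 →
      P i = q * ∑ j ∈ Finset.range i, P j * ∏ l ∈ Finset.Icc 1 (i - 1 - j), (1 - Q l))
    (hPsum : ∑ i ∈ Finset.range k, P i = 1)
    (p0 : ℝ) (hp0 : p0 = ∑ i ∈ Finset.range k, P i * (p + (i : ℝ) * q))
    (A : ℤ → ℝ)
    (hAneg : ∀ j : ℕ, 1 ≤ j → j ≤ k - 1 →
      A ((j : ℤ) - (k : ℤ)) = Q (k - j) * ∏ i ∈ Finset.Icc 1 (j - 1), (1 - Q (k - i)))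
    (hA0 : A 0 = p * ∏ j ∈ Finset.Icc 1 (k - 1), (1 - Q (k - j)))
    (hApos : ∀ j : ℕ, 1 ≤ j → j ≤ k - 1 →
      A (j : ℤ) = q * ∑ l ∈ Finset.range j, P l *
        ((p + (j : ℝ) * q) * ∏ i ∈ Finset.Icc 1 (j - l - 1), (1 - Q i)
          + ∑ i ∈ Finset.Icc 1 (k - j - 1), Q i * ∏ r ∈ Finset.Icc 1 (j - l - 1), (1 - Q (r + i))))
    (δ : ℝ)
    (hδ : IsGreatest {x : ℝ | ∃ j : ℕ, 1 ≤ j ∧ j ≤ k - 1 ∧ x = A ((j : ℤ) - (k : ℤ))} δ) :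
    (A 0 ^ 2 - δ) * (q * Q 1 * (p + q + 1 - p0 - Q (k - 1)))
      ≤ (p ^ 2 - Q 1 * (p ^ 2 - p + 2)) * (A 1 * A (-1)) := by
  have hk2 : 2 ≤ k := by omega
  have fp : IsStaSwitchFixedPoint k q P Q :=
    ⟨fun i hi => (hPmem i (by omega)).1.le, hQ, hP0, hPi, hPsum⟩
  have alloc : IsStaSwitchAllocation k p q P Q A := ⟨hAneg, hA0, hApos⟩
  have hzero : A 0 = p * P 0 := fp.head_eq ▸ alloc.zero_eq
  have hnegOne : (1 - Q 1) * A (-1) = Q 1 * P 0 := fp.head_eq ▸ alloc.one_sub_mul_neg_one_eq hk2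
  have hnegOne_le : A (-1) ≤ δ := hδ.2 ⟨k - 1, by omega, le_rfl, congrArg A (by omega)⟩
  have hhead : (2 - p) * P 0 ≤ 1 :=
    fp.two_sub_mul_head_le_one (Set.Ioo_subset_Icc_self hq) hpq
  have hS : p + q + 1 - p0 - Q (k - 1) = p + q + ∑ j ∈ Icc 1 (k - 2), Q j := by
    rw [fp.sum_switch_init_eq hk2 hpq, hp0]
    ring
  have hqS : 0 ≤ q * (p + q + ∑ j ∈ Icc 1 (k - 2), Q j) :=
    mul_nonneg hq.1.le (add_nonneg (add_pos hp.1 hq.1).le (fp.sum_switch_init_nonneg hq.1.le))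
  have hcancelled := sq_sub_mul_le_of_two_sub_mul_le_one
    (Set.Ioo_subset_Ico_self (hQmem 1 le_rfl (by omega))) (fp.nonneg 0 fp.pos)
    hnegOne hnegOne_le hhead
  rw [hS, alloc.one_eq hk2, hzero]
  linarith [mul_le_mul_of_nonneg_right hcancelled hqS]
end

section
/- The one-step-forward allocating probability admits the closed form 𝒫_1 = q·P^0·(p + q + 1 − p_0 − q_{k−1}), and the one-step-backward allocating probability satisfies 𝒫_{−1} = q_1·∏_{j=2}^{k−1}(1 − q_j). -/
/-!
Each `P^i` enters `q_j = q ∑_{i < k - j} P^i` for exactly `k - 1 - i` indices `j`, so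
`∑_j q_j = ∑_i P^i · (k - 1 - i) q`. Since `p + i q + (k - 1 - i) q = 1` and the `P^i` sum to `1`,
this is `1 - p_0`. The sum over `i` in the definition of `𝒫_1` is `∑_j q_j` without its last term
`q_{k-1}`, which gives the closed form; the formula for `𝒫_{-1}` is the substitution `i ↦ k - i`
in the defining product.
-/

theorem sum_Icc_sum_range_sub {M : Type*} [AddCommMonoid M] (k : ℕ) (f : ℕ → M) :
    ∑ j ∈ Finset.Icc 1 (k - 1), ∑ i ∈ Finset.range (k - j), f i =
      ∑ i ∈ Finset.range k, (k - 1 - i) • f i := by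
  rw [Finset.sum_comm' (t' := Finset.range k) (s' := fun i ↦ Finset.Icc 1 (k - 1 - i))]
  · simp only [Finset.sum_const, Nat.card_Icc, Nat.add_sub_cancel]
  · intro j i
    simp only [Finset.mem_Icc, Finset.mem_range]
    omega

theorem prod_Icc_reflect {M : Type*} [CommMonoid M] (f : ℕ → M) {a b n : ℕ}
    (ha : a ≤ n) (hb : b ≤ n) :
    ∏ j ∈ Finset.Icc a b, f (n - j) = ∏ j ∈ Finset.Icc (n - b) (n - a), f j := by
  have hlower : n + 1 - (b + 1) = n - b := by omega
  have hupper : n + 1 - a = n - a + 1 := by omega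
  rw [← Finset.Ico_add_one_right_eq_Icc, Finset.prod_Ico_reflect f a (by omega), hlower, hupper,
    Finset.Ico_add_one_right_eq_Icc]

section StaSwitch

variable {R : Type*} [CommRing R] {k : ℕ} {p q : R} {P Q : ℕ → R}

theorem sum_Q_eq_one_sub_sum_P_mul (hpq : p + (k - 1 : R) * q = 1)
    (hQ : ∀ j, 1 ≤ j → j ≤ k - 1 → Q j = q * ∑ i ∈ Finset.range (k - j), P i)
    (hPsum : ∑ i ∈ Finset.range k, P i = 1) :
    ∑ j ∈ Finset.Icc 1 (k - 1), Q j = 1 - ∑ i ∈ Finset.range k, P i * (p + (i : R) * q) := by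
  have hcoeff : ∀ i ∈ Finset.range k,
      q * ((k - 1 - i) • P i) = P i - P i * (p + (i : R) * q) := by
    intro i hi
    have hcast : ((k - 1 - i : ℕ) : R) = k - 1 - i := by
      rw [Nat.sub_sub, Nat.cast_sub (by have := Finset.mem_range.1 hi; omega)]
      push_cast
      ring
    rw [nsmul_eq_mul, hcast]
    linear_combination P i * hpq
  calc ∑ j ∈ Finset.Icc 1 (k - 1), Q j
      = ∑ j ∈ Finset.Icc 1 (k - 1), q * ∑ i ∈ Finset.range (k - j), P i :=
        Finset.sum_congr rfl fun j hj ↦ hQ j (Finset.mem_Icc.1 hj).1 (Finset.mem_Icc.1 hj).2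
    _ = ∑ i ∈ Finset.range k, q * ((k - 1 - i) • P i) := by
        rw [← Finset.mul_sum, sum_Icc_sum_range_sub, Finset.mul_sum]
    _ = 1 - ∑ i ∈ Finset.range k, P i * (p + (i : R) * q) := by
        rw [Finset.sum_congr rfl hcoeff, Finset.sum_sub_distrib, hPsum]

theorem staSwitch_P1_Pneg1_closed_form_general (hk : 2 ≤ k)
    (hpq : p + (k - 1 : R) * q = 1)
    (hQ : ∀ j, 1 ≤ j → j ≤ k - 1 → Q j = q * ∑ i ∈ Finset.range (k - j), P i)
    (hPsum : ∑ i ∈ Finset.range k, P i = 1)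
    {p0 : R} (hp0 : p0 = ∑ i ∈ Finset.range k, P i * (p + (i : R) * q))
    {A : ℤ → R}
    (hAneg : ∀ j : ℕ, 1 ≤ j → j ≤ k - 1 →
      A ((j : ℤ) - (k : ℤ)) = Q (k - j) * ∏ i ∈ Finset.Icc 1 (j - 1), (1 - Q (k - i)))
    (hApos : ∀ j : ℕ, 1 ≤ j → j ≤ k - 1 →
      A (j : ℤ) = q * ∑ l ∈ Finset.range j, P l *
        ((p + (j : R) * q) * ∏ i ∈ Finset.Icc 1 (j - l - 1), (1 - Q i)
          + ∑ i ∈ Finset.Icc 1 (k - j - 1),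
              Q i * ∏ r ∈ Finset.Icc 1 (j - l - 1), (1 - Q (r + i)))) :
    A 1 = q * P 0 * (p + q + 1 - p0 - Q (k - 1)) ∧
    A (-1) = Q 1 * ∏ j ∈ Finset.Icc 2 (k - 1), (1 - Q j) := by
  obtain ⟨n, rfl⟩ : ∃ n, k = n + 2 := ⟨k - 2, by omega⟩
  constructor
  · have hA1 : A 1 = q * P 0 * (p + q + ∑ i ∈ Finset.Icc 1 n, Q i) := by
      simpa [mul_assoc] using hApos 1 le_rfl (by omega)
    have hsum : ∑ i ∈ Finset.Icc 1 n, Q i + Q (n + 1) = 1 - p0 := by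
      rw [← Finset.sum_Icc_succ_top (by omega), hp0]
      exact sum_Q_eq_one_sub_sum_P_mul hpq hQ hPsum
    rw [hA1, show n + 2 - 1 = n + 1 from rfl]
    linear_combination q * P 0 * hsum
  · have hindex : ((n + 1 : ℕ) : ℤ) - ((n + 2 : ℕ) : ℤ) = -1 := by omega
    have hAneg1 : A (-1) = Q 1 * ∏ i ∈ Finset.Icc 1 n, (1 - Q (n + 2 - i)) := by
      simpa [hindex, Nat.add_sub_add_left] using hAneg (n + 1) (by omega) le_rfl
    rw [hAneg1, prod_Icc_reflect (fun j ↦ 1 - Q j) (by omega) (by omega), Nat.add_sub_cancel_left]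

end StaSwitch

/-- the one-step-forward allocating probability admits the closed form
`𝒫_1 = q·P^0·(p + q + 1 − p_0 − q_{k−1})`, and the one-step-backward allocating probability
satisfies `𝒫_{−1} = q_1·∏_{j=2}^{k−1}(1 − q_j)`. -/
theorem staSwitch_P1_Pneg1_closed_form
    (k : ℕ) (hk : 3 ≤ k) (p q : ℝ)
    (hp : p ∈ Set.Ioo (0 : ℝ) 1) (hq : q ∈ Set.Ioo (0 : ℝ) 1)
    (hpq : p + (k - 1 : ℝ) * q = 1)
    (P Q : ℕ → ℝ)
    (hPmem : ∀ i, i ≤ k - 1 → P i ∈ Set.Ioo (0 : ℝ) 1)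
    (hQmem : ∀ j, 1 ≤ j → j ≤ k - 1 → Q j ∈ Set.Ioo (0 : ℝ) 1)
    (hQ : ∀ j, 1 ≤ j → j ≤ k - 1 → Q j = q * ∑ i ∈ Finset.range (k - j), P i)
    (hP0 : P 0 = ∏ j ∈ Finset.Icc 1 (k - 1), (1 - Q j))
    (hPi : ∀ i, 1 ≤ i → i ≤ k - 1 →
      P i = q * ∑ j ∈ Finset.range i, P j * ∏ l ∈ Finset.Icc 1 (i - 1 - j), (1 - Q l))
    (hPsum : ∑ i ∈ Finset.range k, P i = 1)
    (p0 : ℝ) (hp0 : p0 = ∑ i ∈ Finset.range k, P i * (p + (i : ℝ) * q))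
    (A : ℤ → ℝ)
    (hAneg : ∀ j : ℕ, 1 ≤ j → j ≤ k - 1 →
      A ((j : ℤ) - (k : ℤ)) = Q (k - j) * ∏ i ∈ Finset.Icc 1 (j - 1), (1 - Q (k - i)))
    (hA0 : A 0 = p * ∏ j ∈ Finset.Icc 1 (k - 1), (1 - Q (k - j)))
    (hApos : ∀ j : ℕ, 1 ≤ j → j ≤ k - 1 →
      A (j : ℤ) = q * ∑ l ∈ Finset.range j, P l *
        ((p + (j : ℝ) * q) * ∏ i ∈ Finset.Icc 1 (j - l - 1), (1 - Q i)
          + ∑ i ∈ Finset.Icc 1 (k - j - 1), Q i * ∏ r ∈ Finset.Icc 1 (j - l - 1), (1 - Q (r + i))))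
    :
    A 1 = q * P 0 * (p + q + 1 - p0 - Q (k - 1)) ∧
    A (-1) = Q 1 * ∏ j ∈ Finset.Icc 2 (k - 1), (1 - Q j) :=
  staSwitch_P1_Pneg1_closed_form_general (by omega) hpq hQ hPsum hp0 hAneg hApos
end
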